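/- arXiv:1105.1084 — 3 statements merged into one kernel-verified Lean document; each statement's English description precedes it below -/
import Mathlib

section
/- Let (Ω, 𝒜) be a measurable space, H a complex Hilbert space, and P a POVM on (Ω, 𝒜) acting on H such that P(B) is an orthogonal projection for every B ∈ 𝒜 (i.e. P is a normalized projection valued measure). If M₁ and M₂ are POVMs on (Ω, 𝒜) acting on H and t ∈ (0,1) is such that P(B) = t·M₁(B) + (1−t)·M₂(B) for all B ∈ 𝒜, then M₁(B) = M₂(B) = P(B) for all B ∈ 𝒜. In other words, every normalized projection valued measure is an extreme point of the convex set of all POVMs on (Ω, 𝒜) acting on H. -/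
open MeasureTheory Set

local notation "⟪" x ", " y "⟫" => @inner ℂ _ _ x y

/-- A normalized positive operator valued measure (POVM) on a measurable space `Ω`,
acting on a complex Hilbert space `H`.  Only the values on measurable sets are relevant. -/
structure POVM (Ω : Type*) [MeasurableSpace Ω] (H : Type*) [NormedAddCommGroup H]
    [InnerProductSpace ℂ H] [CompleteSpace H] where
  toFun : Set Ω → (H →L[ℂ] H)
  isPositive : ∀ B : Set Ω, MeasurableSet B → (toFun B).IsPositive
  normalized : toFun Set.univ = 1
  m_iUnion : ∀ B : ℕ → Set Ω, (∀ k, MeasurableSet (B k)) →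
    Pairwise (Function.onFun Disjoint B) → ∀ φ ψ : H,
      HasSum (fun k => ⟪φ, toFun (B k) ψ⟫) ⟪φ, toFun (⋃ k, B k) ψ⟫

theorem pos_aux {H : Type*} [NormedAddCommGroup H]
    [InnerProductSpace ℂ H] [CompleteSpace H] (T : H →L[ℂ] H) (hT : T.IsPositive) (x : H)
    (h : (⟪x, T x⟫).re = 0) : T x = 0 := by
  obtain ⟨b, hb⟩ := CStarAlgebra.nonneg_iff_eq_star_mul_self.1
    ((ContinuousLinearMap.nonneg_iff_isPositive T).2 hT)
  have h1 : ⟪x, T x⟫ = ⟪b x, b x⟫ := by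
    rw [hb, ContinuousLinearMap.star_eq_adjoint, ContinuousLinearMap.mul_apply,
      ContinuousLinearMap.adjoint_inner_right]
  rw [h1] at h
  have h2 : b x = 0 := by
    have := inner_self_eq_norm_sq (𝕜 := ℂ) (b x)
    simp only [RCLike.re_to_complex] at this
    rw [h] at this
    simpa using this.symm
  rw [hb, ContinuousLinearMap.mul_apply, h2, map_zero]

theorem povm_empty {Ω H : Type*} [MeasurableSpace Ω] [NormedAddCommGroup H]
    [InnerProductSpace ℂ H] [CompleteSpace H] (M : POVM Ω H) : M.toFun ∅ = 0 := by
  ext x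
  apply ext_inner_left ℂ
  intro v
  have h := (M.m_iUnion (fun _ => ∅) (fun _ => MeasurableSet.empty)
    (fun _ _ _ => by simp [Function.onFun]) v x).summable
  rw [summable_const_iff] at h
  simpa using h

theorem povm_compl {Ω H : Type*} [MeasurableSpace Ω] [NormedAddCommGroup H]
    [InnerProductSpace ℂ H] [CompleteSpace H] (M : POVM Ω H) (B : Set Ω)
    (hB : MeasurableSet B) (x : H) : M.toFun B x + M.toFun Bᶜ x = x := by
  apply ext_inner_left ℂ
  intro v
  let F : ℕ → Set Ω := fun k => if k = 0 then B else if k = 1 then Bᶜ else ∅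
  have hF : ⋃ k, F k = Set.univ := by
    apply Set.eq_univ_of_forall
    intro y
    by_cases hy : y ∈ B
    · exact Set.mem_iUnion.2 ⟨0, by simpa [F] using hy⟩
    · exact Set.mem_iUnion.2 ⟨1, by simpa [F] using hy⟩
  have h := M.m_iUnion F ?_ ?_ v x
  · have h2 : HasSum (fun k => ⟪v, M.toFun (F k) x⟫)
        (∑ k ∈ Finset.range 2, ⟪v, M.toFun (F k) x⟫) := by
      apply hasSum_sum_of_ne_finset_zero
      intro k hk
      have h0 : k ≠ 0 := by rintro rfl; simp at hk
      have h1 : k ≠ 1 := by rintro rfl; simp at hk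
      simp [F, h0, h1, povm_empty]
    have h3 := h2.unique h
    rw [hF, M.normalized] at h3
    simpa [Finset.sum_range_succ, F, inner_add_right] using h3
  · intro k
    dsimp only [F]
    split_ifs
    exacts [hB, hB.compl, MeasurableSet.empty]
  · intro i j hij
    simp only [Function.onFun, F]
    split_ifs <;> first | omega | simp [disjoint_compl_left, disjoint_compl_right]

theorem povm_eq {Ω H : Type*} [MeasurableSpace Ω] [NormedAddCommGroup H]
    [InnerProductSpace ℂ H] [CompleteSpace H] (P M : POVM Ω H)
    (hproj : ∀ B : Set Ω, MeasurableSet B → P.toFun B ∘L P.toFun B = P.toFun B)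
    (hk : ∀ B : Set Ω, MeasurableSet B → ∀ x, P.toFun B x = 0 → M.toFun B x = 0)
    (B : Set Ω) (hB : MeasurableSet B) : M.toFun B = P.toFun B := by
  ext x
  have key : ∀ C : Set Ω, MeasurableSet C → ∀ y, P.toFun C (P.toFun Cᶜ y) = 0 := by
    intro C hC y
    have h := congrArg (P.toFun C) (povm_compl P C hC y)
    have h2 := DFunLike.congr_fun (hproj C hC) y
    rw [ContinuousLinearMap.comp_apply] at h2
    rw [map_add, h2] at h
    simpa using h
  have h1 := hk B hB _ (key B hB x)
  have h2 := key Bᶜ hB.compl x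
  rw [compl_compl] at h2
  have h3 := hk Bᶜ hB.compl _ h2
  have h4 := povm_compl M B hB (P.toFun B x)
  rw [h3, add_zero] at h4
  have h5 := congrArg (M.toFun B) (povm_compl P B hB x)
  rw [map_add, h1, add_zero, h4] at h5
  exact h5.symm

theorem mix_aux {H : Type*} [NormedAddCommGroup H]
    [InnerProductSpace ℂ H] [CompleteSpace H] (P S T : H →L[ℂ] H) (hS : S.IsPositive)
    (hT : T.IsPositive) (s t : ℝ) (hs : 0 < s) (ht : 0 < t)
    (h : P = (s : ℂ) • S + (t : ℂ) • T) (x : H) (hx : P x = 0) : S x = 0 := by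
  apply pos_aux S hS
  have h1 : 0 ≤ (⟪x, S x⟫).re := hS.re_inner_nonneg_right x
  have h2 : 0 ≤ (⟪x, T x⟫).re := hT.re_inner_nonneg_right x
  have h3 : s * (⟪x, S x⟫).re + t * (⟪x, T x⟫).re = 0 := by
    have : (⟪x, P x⟫).re = 0 := by simp [hx]
    rw [h] at this
    simpa [inner_add_right, inner_smul_right] using this
  have h4 := mul_nonneg ht.le h2
  have h5 : s * (⟪x, S x⟫).re ≤ 0 := by linarith
  nlinarith

/-- Every normalized projection valued measure is an extreme point of the convex set of
all POVMs on `(Ω, 𝒜)` acting on `H`. -/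
theorem stmt0 {Ω H : Type*} [MeasurableSpace Ω] [NormedAddCommGroup H]
    [InnerProductSpace ℂ H] [CompleteSpace H]
    (P M₁ M₂ : POVM Ω H)
    (hproj : ∀ B : Set Ω, MeasurableSet B →
      P.toFun B ∘L P.toFun B = P.toFun B ∧ IsSelfAdjoint (P.toFun B))
    (t : ℝ) (ht0 : 0 < t) (ht1 : t < 1)
    (hmix : ∀ B : Set Ω, MeasurableSet B →
      P.toFun B = (t : ℂ) • M₁.toFun B + ((1 - t : ℝ) : ℂ) • M₂.toFun B) :
    ∀ B : Set Ω, MeasurableSet B →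
      M₁.toFun B = P.toFun B ∧ M₂.toFun B = P.toFun B := by
  intro B hB
  constructor
  · refine povm_eq P M₁ (fun B hB => (hproj B hB).1) (fun C hC x hx => ?_) B hB
    exact mix_aux _ _ _ (M₁.isPositive C hC) (M₂.isPositive C hC) t (1 - t) ht0 (by linarith)
      (hmix C hC) x hx
  · refine povm_eq P M₂ (fun B hB => (hproj B hB).1) (fun C hC x hx => ?_) B hB
    exact mix_aux _ _ _ (M₂.isPositive C hC) (M₁.isPositive C hC) (1 - t) t (by linarith) ht0
      ((hmix C hC).trans (add_comm _ _)) x hx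
end

section
/- Let n ≥ 1 and let Λ ⊆ ℝⁿ be a Borel set of positive Lebesgue measure. Let M be a POVM on (ℝⁿ, ℬ(ℝⁿ)) acting on L²(Λ) that is covariant under U_Λ, i.e. U_Λ(q) M(B) U_Λ(q)* = M(B + q) for all q ∈ ℝⁿ and all Borel B ⊆ ℝⁿ. Then there exists a weakly measurable map ξ: Λ → ℓ²(ℕ) with ‖ξ(p)‖ = 1 for almost every p ∈ Λ such that for all φ, ψ ∈ (L¹ ∩ L²)(Λ) and all Borel B ⊆ ℝⁿ: ⟨φ, M(B)ψ⟩ = (2π)^{−n} ∫_B ∫_Λ ∫_Λ e^{i(x|p₁−p₂)} ⟨ξ(p₁), ξ(p₂)⟩ conj(φ(p₁)) ψ(p₂) dp₁ dp₂ dx. -/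
open MeasureTheory Set
open scoped ComplexConjugate

local notation "⟪" x ", " y "⟫" => @inner ℂ _ _ x y

/-- `ℓ²(ℕ)`. -/
noncomputable abbrev ell2 : Type := lp (fun _ : ℕ => ℂ) 2

/-- Covariance of a POVM `M` on `ℝⁿ` acting on `L²(Λ)` under a family of unitaries `U`:
`U(q) M(B) U(q)* = M(B + q)`. -/
def IsCovariantPos (n : ℕ) (Λ : Set (Fin n → ℝ))
    (U : (Fin n → ℝ) →
      (Lp ℂ 2 (volume.restrict Λ) ≃ₗᵢ[ℂ] Lp ℂ 2 (volume.restrict Λ)))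
    (M : POVM (Fin n → ℝ) (Lp ℂ 2 (volume.restrict Λ))) : Prop :=
  ∀ q : Fin n → ℝ, ∀ B : Set (Fin n → ℝ), MeasurableSet B →
    ∀ φ ψ : Lp ℂ 2 (volume.restrict Λ),
      ⟪(U q φ : Lp ℂ 2 (volume.restrict Λ)),
          M.toFun ((fun x => x + q) '' B) (U q ψ)⟫ = ⟪φ, M.toFun B ψ⟫

section plan
open scoped ComplexConjugate ENNReal
open FourierTransform SchwartzMap

theorem plancherel_ae {V : Type*} [NormedAddCommGroup V] [InnerProductSpace ℝ V] [FiniteDimensional ℝ V]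
    [MeasurableSpace V] [BorelSpace V] (f : V → ℂ) (h1 : Integrable f) (h2 : MemLp f 2) :
    ∀ᵐ x, (𝓕 (h2.toLp f) : Lp ℂ 2 (volume : Measure V)) x = 𝓕 f x := by
  apply ae_eq_of_integral_contDiff_smul_eq
  · exact (Lp.memLp _).locallyIntegrable (by norm_num)
  · have : Continuous (𝓕 f) := VectorFourier.fourierIntegral_continuous Real.continuous_fourierChar
      (innerSL ℝ).continuous₂ h1
    exact this.locallyIntegrable
  intro g g_diff g_supp
  have hg₁ : HasCompactSupport (Complex.ofRealCLM ∘ g) := g_supp.comp_left rfl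
  have hg₂ : ContDiff ℝ (⊤ : ℕ∞) (Complex.ofRealCLM ∘ g) := by fun_prop
  set G : 𝓢(V, ℂ) := hg₁.toSchwartzMap hg₂ with hG
  have hGx : ∀ x, G x = (g x : ℂ) := fun x => by simp [hG]
  have key := congrArg (fun T => T G) (Lp.fourier_toTemperedDistribution_eq (h2.toLp f))
  simp only [TemperedDistribution.fourier_apply, Lp.toTemperedDistribution_apply] at key
  have e1 : ∫ x, g x • (𝓕 (h2.toLp f) : Lp ℂ 2 (volume : Measure V)) x
      = ∫ x, G x • (𝓕 (h2.toLp f) : Lp ℂ 2 (volume : Measure V)) x := by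
    simp only [hGx, Complex.real_smul, smul_eq_mul]
  have e2 : ∫ x, g x • 𝓕 f x = ∫ x, G x • 𝓕 f x := by
    simp only [hGx, Complex.real_smul, smul_eq_mul]
  rw [e1, e2, ← key]
  have e3 : ∫ x, (𝓕 G) x • (h2.toLp f) x = ∫ x, (𝓕 G) x • f x := by
    apply integral_congr_ae
    filter_upwards [h2.coeFn_toLp] with x hx
    rw [hx]
  rw [e3]
  have := VectorFourier.integral_fourierIntegral_smul_eq_flip (μ := (volume : Measure V)) (ν := (volume : Measure V)) (L := innerₗ V) (f := G) (g := f)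
    Real.continuous_fourierChar (innerSL ℝ).continuous₂ G.integrable h1
  rw [flip_innerₗ] at this
  exact this

theorem elpnorm_sq {α F : Type*} [MeasurableSpace α] [NormedAddCommGroup F] (μ : Measure α) (f : α → F) :
    eLpNorm f 2 μ ^ 2 = ∫⁻ x, ‖f x‖ₑ ^ 2 ∂μ := by
  rw [eLpNorm_eq_lintegral_rpow_enorm_toReal (p := 2) two_ne_zero ENNReal.ofNat_ne_top,
    ← ENNReal.rpow_natCast, ← ENNReal.rpow_mul]
  norm_num

noncomputable def chE {n : ℕ} (x p : Fin n → ℝ) : ℂ := Complex.exp (Complex.I * ((∑ k, x k * p k : ℝ) : ℂ))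

theorem lintegral_scale (n : ℕ) (F : (Fin n → ℝ) → ℝ≥0∞) (c : ℝ) (hc : c ≠ 0) :
    ∫⁻ x, F x = ENNReal.ofReal (|c| ^ n) * ∫⁻ x, F (c • x) := by
  have h1 : ∫⁻ x, F (c • x) = ∫⁻ y, F y ∂(Measure.map (fun x : Fin n → ℝ => c • x) volume) := by
    exact ((Homeomorph.smulOfNeZero c hc).measurableEmbedding.lintegral_map
      (μ := (volume : Measure (Fin n → ℝ))) F).symm
  rw [h1, Measure.map_addHaar_smul _ hc, lintegral_smul_measure, smul_eq_mul, ← mul_assoc,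
    ← ENNReal.ofReal_mul (by positivity)]
  simp only [Module.finrank_fintype_fun_eq_card, Fintype.card_fin, abs_inv, abs_pow]
  rw [mul_inv_cancel₀ (by positivity)]
  simp

theorem planch (n : ℕ) (g : (Fin n → ℝ) → ℂ) (h1 : Integrable g) (h2 : MemLp g 2) :
    ∫⁻ x : Fin n → ℝ, ‖∫ p, chE x p * g p‖ₑ ^ 2 = ENNReal.ofReal ((2 * Real.pi) ^ n) * ∫⁻ p, ‖g p‖ₑ ^ 2 := by
  rw [lintegral_scale n _ (-(2 * Real.pi)) (by have := Real.pi_pos; simp [this.ne'])]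
  rw [abs_neg, abs_of_pos (by positivity)]
  congr 1
  have mp := PiLp.volume_preserving_ofLp (Fin n)
  have emb : MeasurableEmbedding (WithLp.ofLp : EuclideanSpace ℝ (Fin n) → (Fin n → ℝ)) :=
    (MeasurableEquiv.toLp 2 (Fin n → ℝ)).symm.measurableEmbedding
  set f : EuclideanSpace ℝ (Fin n) → ℂ := fun v => g v.ofLp with hf
  have f1 : Integrable f := (mp.integrable_comp_emb emb).2 h1
  have f2 : MemLp f 2 := h2.comp_measurePreserving mp
  have hF := plancherel_ae f f1 f2
  have hn := Lp.norm_fourier_eq (f2.toLp f)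
  rw [Lp.norm_def, Lp.norm_def, ENNReal.toReal_eq_toReal_iff' (Lp.eLpNorm_ne_top _) (Lp.eLpNorm_ne_top _)] at hn
  rw [eLpNorm_congr_ae f2.coeFn_toLp, eLpNorm_congr_ae hF] at hn
  have hn2 : ∫⁻ x, ‖𝓕 f x‖ₑ ^ 2 = ∫⁻ x, ‖f x‖ₑ ^ 2 := by
    have := congrArg (fun t : ℝ≥0∞ => t ^ 2) hn
    simp only [elpnorm_sq] at this
    exact this
  rw [← mp.lintegral_comp_emb emb, ← mp.lintegral_comp_emb emb, ← hn2]
  congr 1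
  ext w
  congr 2
  rw [← mp.integral_comp emb, Real.fourier_eq']
  congr 1
  ext v
  simp only [smul_eq_mul, hf, chE]
  congr 2
  simp [PiLp.inner_apply, Finset.mul_sum, Finset.sum_mul]
  apply Finset.sum_congr rfl
  intros
  ring
end plan

section opsx
open MeasureTheory Set Filter Topology
open scoped ComplexConjugate ENNReal

section ops
variable {H : Type*} [NormedAddCommGroup H] [InnerProductSpace ℂ H] [CompleteSpace H]

theorem selfsq (x : H) : ⟪x, x⟫ = ((‖x‖ ^ 2 : ℝ) : ℂ) := by
  rw [inner_self_eq_norm_sq_to_K]; norm_cast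

theorem sqrt_exists (A : H →L[ℂ] H) (hA : A.IsPositive) : ∃ S : H →L[ℂ] H,
    (∀ φ ψ, ⟪φ, A ψ⟫ = ⟪S φ, S ψ⟫) ∧ (∀ φ ψ, ⟪φ, S ψ⟫ = ⟪S φ, ψ⟫) := by
  have h0 : 0 ≤ A := (ContinuousLinearMap.nonneg_iff_isPositive A).2 hA
  have hS : 0 ≤ CFC.sqrt A := CFC.sqrt_nonneg A
  have hS' := (ContinuousLinearMap.nonneg_iff_isPositive _).1 hS
  have sym : ∀ φ ψ, ⟪φ, CFC.sqrt A ψ⟫ = ⟪CFC.sqrt A φ, ψ⟫ := fun φ ψ => (hS'.isSymmetric φ ψ).symm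
  refine ⟨CFC.sqrt A, fun φ ψ => ?_, sym⟩
  rw [← sym]
  congr 1
  conv_lhs => rw [← CFC.sqrt_mul_sqrt_self A h0]
  rfl

theorem pos_re (A : H →L[ℂ] H) (hA : A.IsPositive) (φ : H) :
    ⟪φ, A φ⟫ = ((⟪φ, A φ⟫.re : ℝ) : ℂ) ∧ 0 ≤ ⟪φ, A φ⟫.re := by
  obtain ⟨S, h1, h2⟩ := sqrt_exists A hA
  rw [h1, selfsq, Complex.ofReal_re]
  exact ⟨rfl, by positivity⟩

theorem pos_cs (A : H →L[ℂ] H) (hA : A.IsPositive) (φ ψ : H) :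
    ‖⟪φ, A ψ⟫‖ ^ 2 ≤ ⟪φ, A φ⟫.re * ⟪ψ, A ψ⟫.re := by
  obtain ⟨S, h1, h2⟩ := sqrt_exists A hA
  rw [h1, h1, h1, selfsq, selfsq, Complex.ofReal_re, Complex.ofReal_re, ← mul_pow]
  gcongr
  exact norm_inner_le_norm _ _

theorem pos_bd (A : H →L[ℂ] H) (hA : A.IsPositive) (K : ℝ) (hK : 0 ≤ K)
    (h : ∀ φ, ⟪φ, A φ⟫.re ≤ K * ‖φ‖ ^ 2) (φ ψ : H) :
    ‖⟪φ, A ψ⟫‖ ≤ K * ‖φ‖ * ‖ψ‖ := by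
  refine abs_le_of_sq_le_sq' ?_ (by positivity) |>.2
  refine (pos_cs A hA φ ψ).trans ?_
  calc _ ≤ (K * ‖φ‖ ^ 2) * (K * ‖ψ‖ ^ 2) :=
        mul_le_mul (h _) (h _) (pos_re A hA ψ).2 (by positivity)
    _ = _ := by ring

theorem ultralim (A : ℕ → H →L[ℂ] H) (hA : ∀ m, (A m).IsPositive) (K : ℝ) (hK : 0 ≤ K)
    (h : ∀ m φ, ⟪φ, A m φ⟫.re ≤ K * ‖φ‖ ^ 2) :
    ∃ D : H →L[ℂ] H, D.IsPositive ∧ ∀ φ,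
      Tendsto (fun m => ⟪φ, A m φ⟫.re) (hyperfilter ℕ : Filter ℕ) (𝓝 ⟪φ, D φ⟫.re) := by
  have hb : ∀ φ ψ : H, ∃ z : ℂ, ‖z‖ ≤ K * ‖φ‖ * ‖ψ‖ ∧
      Tendsto (fun m => ⟪φ, A m ψ⟫) (hyperfilter ℕ : Filter ℕ) (𝓝 z) := by
    intro φ ψ
    have := (isCompact_closedBall (0 : ℂ) (K * ‖φ‖ * ‖ψ‖)).ultrafilter_le_nhds'
      ((hyperfilter ℕ).map (fun m => ⟪φ, A m ψ⟫)) (by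
        rw [Ultrafilter.mem_map]
        apply Filter.Eventually.of_forall
        intro m
        simpa using pos_bd (A m) (hA m) K hK (h m) φ ψ)
    obtain ⟨z, hz, hz2⟩ := this
    exact ⟨z, by simpa using hz, hz2⟩
  choose b hb1 hb2 using hb
  have u : ∀ {f : ℕ → ℂ} {x y : ℂ}, Tendsto f (hyperfilter ℕ : Filter ℕ) (𝓝 x) →
    Tendsto f (hyperfilter ℕ : Filter ℕ) (𝓝 y) → x = y := fun h1 h2 => tendsto_nhds_unique h1 h2
  let B0 : H →ₗ⋆[ℂ] H →ₗ[ℂ] ℂ := LinearMap.mk₂'ₛₗ (starRingEnd ℂ) (RingHom.id ℂ) b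
    (fun x y z => u (hb2 _ _) (by simpa [inner_add_left] using (hb2 x z).add (hb2 y z)))
    (fun c x z => u (hb2 _ _) (by simpa [inner_smul_left, mul_comm] using (hb2 x z).const_mul (conj c)))
    (fun x y z => u (hb2 _ _) (by simpa [inner_add_right] using (hb2 x y).add (hb2 x z)))
    (fun c x z => u (hb2 _ _) (by simpa [inner_smul_right] using (hb2 x z).const_mul c))
  let B1 : H →L⋆[ℂ] H →L[ℂ] ℂ := B0.mkContinuous₂ K hb1
  let D := InnerProductSpace.continuousLinearMapOfBilin B1
  have hD : ∀ φ ψ, ⟪D φ, ψ⟫ = b φ ψ := fun φ ψ =>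
    InnerProductSpace.continuousLinearMapOfBilin_apply B1 φ ψ
  have hbp : ∀ φ, 0 ≤ (b φ φ).re ∧ (b φ φ).im = 0 := by
    intro φ
    constructor
    · exact ge_of_tendsto ((Complex.continuous_re.tendsto _).comp (hb2 φ φ))
        (Eventually.of_forall fun m => (pos_re (A m) (hA m) φ).2)
    · refine tendsto_nhds_unique ((Complex.continuous_im.tendsto _).comp (hb2 φ φ)) ?_
      refine tendsto_const_nhds.congr fun m => ?_
      have := congrArg Complex.im (pos_re (A m) (hA m) φ).1
      simpa using this.symm
  refine ⟨D, ?_, fun φ => ?_⟩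
  · rw [ContinuousLinearMap.isPositive_iff_complex]
    intro φ
    rw [hD]
    refine ⟨?_, (hbp φ).1⟩
    apply Complex.ext
    · simp
    · simp [(hbp φ).2]
  · have : ⟪φ, D φ⟫.re = (b φ φ).re := by
      rw [← hD, ← inner_conj_symm, Complex.conj_re]
    rw [this]
    exact (Complex.continuous_re.tendsto _).comp (hb2 φ φ)

theorem parseval_seq [TopologicalSpace.SeparableSpace H] :
    ∃ e : ℕ → H, ∀ v, HasSum (fun k => ‖⟪e k, v⟫‖ ^ 2) (‖v‖ ^ 2) := by
  obtain ⟨w, b, hb⟩ := exists_hilbertBasis ℂ H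
  have hc : Countable w := by
    have ho := b.orthonormal
    refine Pairwise.countable_of_isOpen_disjoint (s := fun i : w => Metric.ball (b i) (1 / 2)) ?_
      (fun i => Metric.isOpen_ball) (fun i => ⟨b i, by simp⟩)
    intro i j hij
    apply Metric.ball_disjoint_ball
    have h2 : ‖b i - b j‖ ^ 2 = 2 := by
      rw [@norm_sub_sq ℂ, ho.1 i, ho.1 j, ho.2 hij]
      norm_num
    rw [dist_eq_norm]
    nlinarith [norm_nonneg (b i - b j)]
  have hs : ∀ v, HasSum (fun i => ‖⟪b i, v⟫‖ ^ 2) (‖v‖ ^ 2) := by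
    intro v
    have := b.hasSum_inner_mul_inner v v
    have := Complex.hasSum_re this
    convert this using 1
    · ext i
      rw [← inner_conj_symm v (b i), Complex.conj_mul']
      norm_cast
    · rw [selfsq, Complex.ofReal_re]
  obtain ⟨f, hf⟩ := hc.exists_injective_nat
  refine ⟨Function.extend f (fun i => b i) 0, fun v => ?_⟩
  rw [← hf.hasSum_iff]
  · convert hs v using 1
    ext i
    simp [hf.extend_apply]
  · intro k hk
    rw [Function.extend_apply' _ _ _ (by simpa using hk)]
    simp
end ops
end opsx

section povm
open Filter Topology
open scoped ENNReal
variable {Ω : Type*} [MeasurableSpace Ω] {H : Type*} [NormedAddCommGroup H]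
    [InnerProductSpace ℂ H] [CompleteSpace H]

theorem POVM.empty (M : POVM Ω H) (φ ψ : H) : ⟪φ, M.toFun ∅ ψ⟫ = 0 := by
  have h := M.m_iUnion (fun _ => ∅) (fun _ => MeasurableSet.empty) (fun i j _ => by simp [Function.onFun]) φ ψ
  exact tendsto_nhds_unique tendsto_const_nhds h.summable.tendsto_atTop_zero

noncomputable def POVM.meas (M : POVM Ω H) (φ : H) : Measure Ω :=
  Measure.ofMeasurable (fun B _ => ENNReal.ofReal (⟪φ, M.toFun B φ⟫.re)) (by simp [M.empty]) (by
    intro f hf hd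
    have h := Complex.hasSum_re (M.m_iUnion f hf hd φ φ)
    rw [← h.tsum_eq]
    exact ENNReal.ofReal_tsum_of_nonneg (fun k => (pos_re _ (M.isPositive _ (hf k)) φ).2) h.summable)

theorem POVM.meas_apply (M : POVM Ω H) (φ : H) {B : Set Ω} (hB : MeasurableSet B) :
    M.meas φ B = ENNReal.ofReal (⟪φ, M.toFun B φ⟫.re) := Measure.ofMeasurable_apply B hB

theorem POVM.meas_univ (M : POVM Ω H) (φ : H) : M.meas φ univ = ENNReal.ofReal (‖φ‖ ^ 2) := by
  rw [M.meas_apply φ MeasurableSet.univ, M.normalized]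
  simp only [one_apply_eq_self]
  rw [selfsq, Complex.ofReal_re]

instance POVM.meas_fin (M : POVM Ω H) (φ : H) : IsFiniteMeasure (M.meas φ) :=
  ⟨by rw [M.meas_univ]; exact ENNReal.ofReal_lt_top⟩

theorem conv_lemma {n : ℕ} (ν : Measure (Fin n → ℝ)) [SFinite ν] {B : Set (Fin n → ℝ)} (hB : MeasurableSet B) :
    ∫⁻ q, ν ((fun x => x + q) ⁻¹' B) = volume B * ν univ := by
  have h1 : ∀ q, ν ((fun x => x + q) ⁻¹' B) = ∫⁻ x, B.indicator 1 (x + q) ∂ν := by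
    intro q
    rw [← lintegral_indicator_one (hB.preimage (by fun_prop))]
    rfl
  simp_rw [h1]
  have hm : Measurable (B.indicator (1 : (Fin n → ℝ) → ℝ≥0∞)) := measurable_one.indicator hB
  rw [lintegral_lintegral_swap (by fun_prop)]
  simp_rw [lintegral_add_left_eq_self (μ := (volume : Measure (Fin n → ℝ))) (B.indicator 1)]
  rw [lintegral_indicator_one hB]
  simp
end povm

section cov
open Filter Topology
open scoped ENNReal
variable {n : ℕ} {Λ : Set (Fin n → ℝ)} {U : (Fin n → ℝ) →
      (Lp ℂ 2 (volume.restrict Λ) ≃ₗᵢ[ℂ] Lp ℂ 2 (volume.restrict Λ))}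
     {M : POVM (Fin n → ℝ) (Lp ℂ 2 (volume.restrict Λ))}

theorem cov_meas (hM : IsCovariantPos n Λ U M) (q : Fin n → ℝ) (φ : Lp ℂ 2 (volume.restrict Λ))
    {B : Set (Fin n → ℝ)} (hB : MeasurableSet B) :
    M.meas (U q φ) B = M.meas φ ((fun x => x + q) ⁻¹' B) := by
  have hB' : MeasurableSet ((fun x => x + q) ⁻¹' B) := hB.preimage (by fun_prop)
  rw [M.meas_apply _ hB, M.meas_apply _ hB', ← hM q _ hB' φ φ,
    image_preimage_eq _ (fun y => ⟨y - q, by simp⟩)]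

theorem cov_int (hM : IsCovariantPos n Λ U M) (φ : Lp ℂ 2 (volume.restrict Λ))
    {B : Set (Fin n → ℝ)} (hB : MeasurableSet B) :
    ∫⁻ q, M.meas (U q φ) B = volume B * ENNReal.ofReal (‖φ‖ ^ 2) := by
  simp_rw [cov_meas hM _ φ hB]
  rw [conv_lemma _ hB, M.meas_univ]

theorem chE_norm (x p : Fin n → ℝ) : ‖chE x p‖ = 1 := by
  rw [chE, mul_comm, Complex.norm_exp_ofReal_mul_I]

theorem inner_U
    (hU : ∀ q : Fin n → ℝ, ∀ φ : Lp ℂ 2 (volume.restrict Λ),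
      (U q φ : (Fin n → ℝ) → ℂ) =ᵐ[volume.restrict Λ] fun p => chE q p * φ p)
    (h ψ : Lp ℂ 2 (volume.restrict Λ)) (q : Fin n → ℝ) :
    ⟪h, U q ψ⟫ = ∫ p, chE q p * (conj (h p) * ψ p) ∂(volume.restrict Λ) := by
  rw [L2.inner_def]
  apply integral_congr_ae
  filter_upwards [hU q ψ] with p hp
  rw [hp, RCLike.inner_apply]
  ring

theorem plan_U (hΛ : MeasurableSet Λ)
    (hU : ∀ q : Fin n → ℝ, ∀ φ : Lp ℂ 2 (volume.restrict Λ),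
      (U q φ : (Fin n → ℝ) → ℂ) =ᵐ[volume.restrict Λ] fun p => chE q p * φ p)
    (h ψ : Lp ℂ 2 (volume.restrict Λ))
    (h2 : MemLp (fun p => conj (h p) * ψ p) 2 (volume.restrict Λ)) :
    ∫⁻ q, ‖⟪h, U q ψ⟫‖ₑ ^ 2 = ENNReal.ofReal ((2 * Real.pi) ^ n) *
      ∫⁻ p, ‖conj (h p) * ψ p‖ₑ ^ 2 ∂(volume.restrict Λ) := by
  have h1 : Integrable (fun p => conj (h p) * ψ p) (volume.restrict Λ) := by
    refine (L2.integrable_inner (𝕜 := ℂ) h ψ).congr (Eventually.of_forall fun p => ?_)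
    simp only [RCLike.inner_apply]
    ring
  have i1 : Integrable (Λ.indicator (fun p => conj (h p) * ψ p)) := (integrable_indicator_iff hΛ).2 h1
  have i2 : MemLp (Λ.indicator (fun p => conj (h p) * ψ p)) 2 := (memLp_indicator_iff_restrict hΛ).2 h2
  have := planch n _ i1 i2
  simp_rw [inner_U hU]
  convert this using 2
  · ext q
    congr 2
    rw [← integral_indicator hΛ]
    congr 1
    ext p
    by_cases hp : p ∈ Λ <;> simp [hp]
  · rw [← lintegral_indicator hΛ]
    congr 1
    ext p
    by_cases hp : p ∈ Λ <;> simp [hp]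

theorem plan_ind (hΛ : MeasurableSet Λ)
    (hU : ∀ q : Fin n → ℝ, ∀ φ : Lp ℂ 2 (volume.restrict Λ),
      (U q φ : (Fin n → ℝ) → ℂ) =ᵐ[volume.restrict Λ] fun p => chE q p * φ p)
    (h : Lp ℂ 2 (volume.restrict Λ)) {S : Set (Fin n → ℝ)} (hS : MeasurableSet S)
    (hμ : volume.restrict Λ S ≠ ∞) :
    ∫⁻ q, ‖⟪h, U q (indicatorConstLp 2 hS hμ (1 : ℂ))⟫‖ₑ ^ 2 = ENNReal.ofReal ((2 * Real.pi) ^ n) *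
      ∫⁻ p in S, ‖h p‖ₑ ^ 2 ∂(volume.restrict Λ) := by
  have hae : (fun p => conj (h p) * (indicatorConstLp 2 hS hμ (1 : ℂ) : (Fin n → ℝ) → ℂ) p)
      =ᵐ[volume.restrict Λ] S.indicator (fun p => conj (h p)) := by
    filter_upwards [indicatorConstLp_coeFn (p := 2) (hs := hS) (hμs := hμ) (c := (1 : ℂ))] with p hp
    rw [hp]
    by_cases hp : p ∈ S <;> simp [hp]
  rw [plan_U hΛ hU, ← lintegral_indicator hS]
  · congr 1
    apply lintegral_congr_ae
    filter_upwards [hae] with p hp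
    rw [hp]
    by_cases hp : p ∈ S <;> simp [hp]
  · rw [memLp_congr_ae hae]
    exact (Lp.memLp h).star.indicator hS

theorem meas_le (hΛ : MeasurableSet Λ)
    (hU : ∀ q : Fin n → ℝ, ∀ φ : Lp ℂ 2 (volume.restrict Λ),
      (U q φ : (Fin n → ℝ) → ℂ) =ᵐ[volume.restrict Λ] fun p => chE q p * φ p)
    (hM : IsCovariantPos n Λ U M) (φ : Lp ℂ 2 (volume.restrict Λ))
    {B : Set (Fin n → ℝ)} (hB : MeasurableSet B) :
    M.meas φ B ≤ (ENNReal.ofReal ((2 * Real.pi) ^ n))⁻¹ * volume B *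
      (∫⁻ p, ‖φ p‖ₑ ∂(volume.restrict Λ)) ^ 2 := by
  set c := ENNReal.ofReal ((2 * Real.pi) ^ n) with hc
  have hc0 : c ≠ 0 := by rw [hc, ne_eq, ENNReal.ofReal_eq_zero, not_le]; positivity
  have hct : c ≠ ∞ := ENNReal.ofReal_ne_top
  set A := M.toFun B with hA
  have pA := M.isPositive B hB
  have ma : ∀ ψ, M.meas ψ B = ENNReal.ofReal (⟪ψ, A ψ⟫.re) := fun ψ => M.meas_apply ψ hB
  set a := M.meas φ B with ha
  have hat : a ≠ ∞ := measure_ne_top _ _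
  have cs : ∀ ψ, ‖⟪A φ, ψ⟫‖ₑ ^ 2 ≤ a * M.meas ψ B := by
    intro ψ
    rw [ha, ma, ma, ← ENNReal.ofReal_mul (pos_re A pA φ).2, ← ofReal_norm,
      ← ENNReal.ofReal_pow (norm_nonneg _)]
    apply ENNReal.ofReal_le_ofReal
    rw [← inner_conj_symm, RCLike.norm_conj, mul_comm]
    exact pos_cs A pA ψ φ
  set K := c⁻¹ * a * volume B with hK
  have hh : ∀ᵐ p ∂(volume.restrict Λ), ‖(A φ) p‖ₑ ^ 2 ≤ K := by
    apply ae_le_of_forall_setLIntegral_le_of_sigmaFinite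
    · exact ((Lp.stronglyMeasurable (A φ)).measurable.enorm).pow_const 2
    intro S hS hμ
    have h1 := plan_ind hΛ hU (A φ) hS hμ.ne
    have h2 : ∫⁻ q, ‖⟪A φ, U q (indicatorConstLp 2 hS hμ.ne (1 : ℂ))⟫‖ₑ ^ 2 ≤
        a * (volume B * volume.restrict Λ S) := by
      calc _ ≤ ∫⁻ q, a * M.meas (U q (indicatorConstLp 2 hS hμ.ne (1 : ℂ))) B :=
            lintegral_mono fun q => cs _
        _ = _ := by
          rw [lintegral_const_mul' _ _ hat, cov_int hM _ hB]
          congr 2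
          rw [norm_indicatorConstLp two_ne_zero ENNReal.ofNat_ne_top]
          rw [norm_one, one_mul, ← Real.rpow_natCast, ← Real.rpow_mul (by simp)]
          simp [measureReal_def, ENNReal.ofReal_toReal hμ.ne]
    rw [h1] at h2
    rw [setLIntegral_const]
    calc _ = c⁻¹ * (c * ∫⁻ p in S, ‖(A φ) p‖ₑ ^ 2 ∂(volume.restrict Λ)) := by
          rw [← mul_assoc, ENNReal.inv_mul_cancel hc0 hct, one_mul]
      _ ≤ c⁻¹ * (a * (volume B * volume.restrict Λ S)) := by gcongr
      _ = _ := by rw [hK]; ring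
  set L := ∫⁻ p, ‖φ p‖ₑ ∂(volume.restrict Λ) with hL
  have h3 : a ≤ K ^ (1 / 2 : ℝ) * L := by
    calc a ≤ ‖⟪φ, A φ⟫‖ₑ := by
          rw [ha, ma, ← ofReal_norm]
          exact ENNReal.ofReal_le_ofReal (Complex.re_le_norm _)
      _ ≤ ∫⁻ p, ‖⟪φ p, (A φ) p⟫‖ₑ ∂(volume.restrict Λ) := by
          rw [L2.inner_def]
          exact enorm_integral_le_lintegral_enorm _
      _ ≤ ∫⁻ p, K ^ (1 / 2 : ℝ) * ‖φ p‖ₑ ∂(volume.restrict Λ) := by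
          apply lintegral_mono_ae
          filter_upwards [hh] with p hp
          have : ‖(A φ) p‖ₑ ≤ K ^ (1 / 2 : ℝ) := by
            have := ENNReal.rpow_le_rpow hp (z := 1 / 2) (by norm_num)
            rwa [← ENNReal.rpow_natCast, ← ENNReal.rpow_mul, show ((2 : ℕ) : ℝ) * (1 / 2) = 1 by norm_num,
              ENNReal.rpow_one] at this
          rw [RCLike.inner_apply, enorm_mul, ← ofReal_norm (conj (φ p)), RCLike.norm_conj,
            ofReal_norm]
          gcongr
      _ = _ := by
          rw [lintegral_const_mul _ (Lp.stronglyMeasurable φ).measurable.enorm]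
  have h4 : a ^ 2 ≤ K * L ^ 2 := by
    calc a ^ 2 ≤ (K ^ (1 / 2 : ℝ) * L) ^ 2 := by gcongr
      _ = K * L ^ 2 := by
        rw [mul_pow, ← ENNReal.rpow_natCast, ← ENNReal.rpow_mul, show (1 / 2 : ℝ) * ((2 : ℕ) : ℝ) = 1 by norm_num,
              ENNReal.rpow_one]
  by_cases ha0 : a = 0
  · rw [ha0]; exact zero_le
  rw [← ENNReal.mul_le_mul_iff_right ha0 hat]
  calc a * a = a ^ 2 := by ring
    _ ≤ _ := h4
    _ = _ := by rw [hK]; ring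
end cov

section dens
open Filter Topology
open scoped ENNReal

theorem mulW_exists {α : Type*} [MeasurableSpace α] (μ : Measure α) (w : α → ℝ) (hw : Measurable w)
    (h1 : ∀ p, |w p| ≤ 1) : ∃ W : Lp ℂ 2 μ →L[ℂ] Lp ℂ 2 μ,
      ∀ φ : Lp ℂ 2 μ, (W φ : α → ℂ) =ᵐ[μ] fun p => (w p : ℂ) * φ p := by
  have hm : ∀ φ : Lp ℂ 2 μ, MemLp (fun p => (w p : ℂ) * φ p) 2 μ := by
    intro φ
    refine MemLp.mono (Lp.memLp φ) ?_ ?_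
    · exact (Complex.measurable_ofReal.comp hw).aestronglyMeasurable.mul (Lp.aestronglyMeasurable φ)
    · refine Eventually.of_forall fun p => ?_
      simp
      exact mul_le_of_le_one_left (norm_nonneg _) (h1 p)
  have hco : ∀ φ, ((hm φ).toLp _ : α → ℂ) =ᵐ[μ] fun p => (w p : ℂ) * φ p := fun φ => (hm φ).coeFn_toLp
  let W0 : Lp ℂ 2 μ →ₗ[ℂ] Lp ℂ 2 μ :=
    { toFun := fun φ => (hm φ).toLp _
      map_add' := by
        intro φ ψ
        apply Lp.ext
        filter_upwards [hco (φ + ψ), hco φ, hco ψ, Lp.coeFn_add φ ψ, Lp.coeFn_add ((hm φ).toLp _) ((hm ψ).toLp _)] with p h1 h2 h3 h4 h5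
        rw [h1, h5, h4, Pi.add_apply, Pi.add_apply, h2, h3]
        ring
      map_smul' := by
        intro c φ
        apply Lp.ext
        filter_upwards [hco (c • φ), hco φ, Lp.coeFn_smul c φ, Lp.coeFn_smul c ((hm φ).toLp _)] with p h1 h2 h3 h4
        simp only [RingHom.id_apply]
        rw [h1, h4, h3, Pi.smul_apply, Pi.smul_apply, h2]
        simp only [smul_eq_mul]
        ring }
  refine ⟨W0.mkContinuous 1 ?_, hco⟩
  intro φ
  rw [one_mul]
  apply Lp.norm_le_norm_of_ae_le
  filter_upwards [hco φ] with p hp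
  change ‖((hm φ).toLp _ : α → ℂ) p‖ ≤ _
  rw [hp]
  simp
  exact mul_le_of_le_one_left (norm_nonneg _) (h1 p)

theorem mulW_L1 {α : Type*} [MeasurableSpace α] (μ : Measure α) (w : α → ℝ) (hw : Measurable w)
    (φ : Lp ℂ 2 μ) : (∫⁻ p, ‖(w p : ℂ) * φ p‖ₑ ∂μ) ^ 2 ≤ (∫⁻ p, ‖w p‖ₑ ^ 2 ∂μ) * ENNReal.ofReal (‖φ‖ ^ 2) := by
  have h := ENNReal.lintegral_mul_le_Lp_mul_Lq μ (p := 2) (q := 2) Real.HolderConjugate.two_two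
    (f := fun p => ‖w p‖ₑ) (g := fun p => ‖φ p‖ₑ) hw.enorm.aemeasurable
      (Lp.stronglyMeasurable φ).measurable.enorm.aemeasurable
  have h2 : ENNReal.ofReal (‖φ‖ ^ 2) = ∫⁻ p, ‖φ p‖ₑ ^ 2 ∂μ := by
    rw [← elpnorm_sq, Lp.norm_def, ENNReal.ofReal_pow ENNReal.toReal_nonneg, ENNReal.ofReal_toReal (Lp.eLpNorm_ne_top _)]
  rw [h2]
  have h3 := pow_le_pow_left' h 2
  simp only [Pi.mul_apply, mul_pow, ← ENNReal.rpow_natCast, ← ENNReal.rpow_mul] at h3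
  norm_num at h3
  have h4 : ∀ p, ‖(w p : ℂ) * φ p‖ₑ = ‖w p‖ₑ * ‖φ p‖ₑ := by
    intro p
    rw [enorm_mul]
    congr 1
    rw [← ofReal_norm, ← ofReal_norm, Complex.norm_real]
  simp_rw [h4]
  exact h3

theorem contU {n : ℕ} {Λ : Set (Fin n → ℝ)} {U : (Fin n → ℝ) →
      (Lp ℂ 2 (volume.restrict Λ) ≃ₗᵢ[ℂ] Lp ℂ 2 (volume.restrict Λ))}
    (hU : ∀ q : Fin n → ℝ, ∀ φ : Lp ℂ 2 (volume.restrict Λ),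
      (U q φ : (Fin n → ℝ) → ℂ) =ᵐ[volume.restrict Λ] fun p => chE q p * φ p)
    (h ψ : Lp ℂ 2 (volume.restrict Λ)) : Continuous fun q => ⟪h, U q ψ⟫ := by
  simp_rw [inner_U hU]
  have hi : Integrable (fun p => conj (h p) * ψ p) (volume.restrict Λ) := by
    have := L2.integrable_inner (𝕜 := ℂ) h ψ
    refine this.congr (Eventually.of_forall fun p => ?_)
    simp [mul_comm]
  have hc : Continuous fun z : (Fin n → ℝ) × (Fin n → ℝ) => chE z.1 z.2 := by
    unfold chE; fun_prop
  refine continuous_of_dominated (bound := fun p => ‖conj (h p) * ψ p‖) ?_ ?_ hi.norm ?_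
  · intro q
    exact (hc.comp (Continuous.prodMk_right q)).aestronglyMeasurable.mul hi.1
  · intro q
    refine Eventually.of_forall fun p => ?_
    rw [norm_mul, chE_norm, one_mul]
  · refine Eventually.of_forall fun p => ?_
    exact (hc.comp (Continuous.prodMk_left p)).mul continuous_const

variable {n : ℕ} {Λ : Set (Fin n → ℝ)} {U : (Fin n → ℝ) →
      (Lp ℂ 2 (volume.restrict Λ) ≃ₗᵢ[ℂ] Lp ℂ 2 (volume.restrict Λ))}
     {M : POVM (Fin n → ℝ) (Lp ℂ 2 (volume.restrict Λ))}

theorem density (hΛ : MeasurableSet Λ)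
    (hU : ∀ q : Fin n → ℝ, ∀ φ : Lp ℂ 2 (volume.restrict Λ),
      (U q φ : (Fin n → ℝ) → ℂ) =ᵐ[volume.restrict Λ] fun p => chE q p * φ p)
    (hM : IsCovariantPos n Λ U M) (w : (Fin n → ℝ) → ℝ)
    (W : Lp ℂ 2 (volume.restrict Λ) →L[ℂ] Lp ℂ 2 (volume.restrict Λ))
    (hW : ∀ φ : Lp ℂ 2 (volume.restrict Λ), (W φ : (Fin n → ℝ) → ℂ) =ᵐ[volume.restrict Λ] fun p => (w p : ℂ) * φ p)
    (K : ℝ≥0∞) (hK : K ≠ ∞) (hWK : ∀ φ, (∫⁻ p, ‖(W φ) p‖ₑ ∂(volume.restrict Λ)) ^ 2 ≤ K * ENNReal.ofReal (‖φ‖ ^ 2)) :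
    ∃ h : ℕ → Lp ℂ 2 (volume.restrict Λ), ∀ φ, ∀ B, MeasurableSet B →
      M.meas (W φ) B = ∫⁻ x in B, ∑' k, ‖⟪h k, U (-x) φ⟫‖ₑ ^ 2 := by
  set c := ENNReal.ofReal ((2 * Real.pi) ^ n) with hc
  have hc0 : c ≠ 0 := by rw [hc, ne_eq, ENNReal.ofReal_eq_zero, not_le]; positivity
  have hct : c ≠ ∞ := ENNReal.ofReal_ne_top
  let r : ℕ → ℝ := fun m => 1 / ((m : ℝ) + 1)
  have hr : ∀ m, 0 < r m := fun m => by positivity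
  let Bm : ℕ → Set (Fin n → ℝ) := fun m => Metric.closedBall 0 (r m)
  have mBm : ∀ m, MeasurableSet (Bm m) := fun m => Metric.isClosed_closedBall.measurableSet
  have vpos : ∀ m, 0 < volume (Bm m) := fun m => Metric.measure_closedBall_pos _ _ (hr m)
  have vfin : ∀ m, volume (Bm m) ≠ ∞ := fun m => measure_closedBall_lt_top.ne
  let A : ℕ → (Lp ℂ 2 (volume.restrict Λ) →L[ℂ] Lp ℂ 2 (volume.restrict Λ)) := fun m =>
    ((((volume (Bm m)).toReal)⁻¹ : ℝ) : ℂ) • ((ContinuousLinearMap.adjoint W) ∘L (M.toFun (Bm m)) ∘L W)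
  have pA : ∀ m, (A m).IsPositive := fun m =>
    ((M.isPositive _ (mBm m)).adjoint_conj W).smul_of_nonneg (by
      rw [Complex.zero_le_real]; positivity)
  have hAe : ∀ m φ, ENNReal.ofReal (⟪φ, A m φ⟫.re) = M.meas (W φ) (Bm m) / volume (Bm m) := by
    intro m φ
    have : ⟪φ, A m φ⟫.re = ((volume (Bm m)).toReal)⁻¹ * ⟪W φ, M.toFun (Bm m) (W φ)⟫.re := by
      simp only [A, smul_apply, inner_smul_right, ContinuousLinearMap.comp_apply,
        ContinuousLinearMap.adjoint_inner_right, Complex.re_ofReal_mul]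
    rw [this, ENNReal.ofReal_mul (by positivity), ← M.meas_apply _ (mBm m), mul_comm, div_eq_mul_inv,
      ENNReal.ofReal_inv_of_pos (ENNReal.toReal_pos (vpos m).ne' (vfin m)), ENNReal.ofReal_toReal (vfin m)]
  have hAb : ∀ m φ, ⟪φ, A m φ⟫.re ≤ (c⁻¹ * K).toReal * ‖φ‖ ^ 2 := by
    intro m φ
    have : ENNReal.ofReal (⟪φ, A m φ⟫.re) ≤ (c⁻¹ * K) * ENNReal.ofReal (‖φ‖ ^ 2) := by
      rw [hAe]
      apply ENNReal.div_le_of_le_mul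
      refine (meas_le hΛ hU hM (W φ) (mBm m)).trans ?_
      calc _ ≤ c⁻¹ * volume (Bm m) * (K * ENNReal.ofReal (‖φ‖ ^ 2)) := by gcongr; exact hWK φ
        _ = _ := by ring
    have hf : c⁻¹ * K ≠ ∞ := ENNReal.mul_ne_top (ENNReal.inv_ne_top.2 hc0) hK
    rw [← ENNReal.ofReal_toReal hf, ← ENNReal.ofReal_mul ENNReal.toReal_nonneg] at this
    exact (ENNReal.ofReal_le_ofReal_iff (by positivity)).1 this
  obtain ⟨D, pD, hD⟩ := ultralim A pA _ ENNReal.toReal_nonneg hAb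
  obtain ⟨S, hS1, hS2⟩ := sqrt_exists D pD
  haveI : Fact ((2:ℝ≥0∞) ≠ ∞) := ⟨by norm_num⟩
  haveI : TopologicalSpace.SeparableSpace (Lp ℂ 2 (volume.restrict Λ)) := inferInstance
  obtain ⟨e, he⟩ := parseval_seq (H := Lp ℂ 2 (volume.restrict Λ))
  refine ⟨fun k => S (e k), fun φ B hB => ?_⟩
  have hUW : ∀ x, W (U x φ) = U x (W φ) := by
    intro x
    apply Lp.ext
    filter_upwards [hW (U x φ), hU x (W φ), hW φ, hU x φ] with p h1 h2 h3 h4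
    rw [h1, h2, h3, h4]
    ring
  have hlim : ∀ x, Tendsto (fun m => M.meas (W φ) (Metric.closedBall x (r m)) / volume (Metric.closedBall x (r m)))
      (hyperfilter ℕ : Filter ℕ) (𝓝 (∑' k, ‖⟪S (e k), U (-x) φ⟫‖ₑ ^ 2)) := by
    intro x
    have h1 := ENNReal.tendsto_ofReal (hD (U (-x) φ))
    have h2 : ENNReal.ofReal (⟪U (-x) φ, D (U (-x) φ)⟫.re) = ∑' k, ‖⟪S (e k), U (-x) φ⟫‖ₑ ^ 2 := by
      rw [hS1, selfsq, Complex.ofReal_re, ← (he _).tsum_eq, ENNReal.ofReal_tsum_of_nonneg (fun k => by positivity) (he _).summable]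
      congr 1
      ext k
      rw [hS2, ENNReal.ofReal_pow (norm_nonneg _), ofReal_norm]
    rw [h2] at h1
    refine h1.congr fun m => ?_
    rw [hAe, hUW, cov_meas hM _ _ (mBm m)]
    have hpre : (fun y => y + -x) ⁻¹' (Bm m) = Metric.closedBall x (r m) := by
      ext y
      simp [Bm, dist_eq_norm, sub_eq_add_neg]
    have hvol : volume (Bm m) = volume (Metric.closedBall x (r m)) := by
      rw [← hpre, measure_preimage_add_right]
    rw [hpre, hvol]
  have hac : M.meas (W φ) ≪ volume := by
    refine Measure.AbsolutelyContinuous.mk fun s hs h0 => ?_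
    have := meas_le hΛ hU hM (W φ) hs
    rw [h0] at this
    simpa using this
  rw [← Measure.setLIntegral_rnDeriv hac]
  apply lintegral_congr_ae
  apply ae_restrict_of_ae
  filter_upwards [Besicovitch.ae_tendsto_rnDeriv (M.meas (W φ)) volume] with x hx
  have hr0 : Tendsto r atTop (𝓝[>] 0) :=
    tendsto_nhdsWithin_iff.2 ⟨tendsto_one_div_add_atTop_nhds_zero_nat, Eventually.of_forall hr⟩
  exact tendsto_nhds_unique ((hx.comp hr0).mono_left Nat.hyperfilter_le_atTop) (hlim x)

theorem normaliz (hΛ : MeasurableSet Λ)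
    (hU : ∀ q : Fin n → ℝ, ∀ φ : Lp ℂ 2 (volume.restrict Λ),
      (U q φ : (Fin n → ℝ) → ℂ) =ᵐ[volume.restrict Λ] fun p => chE q p * φ p)
    (w : (Fin n → ℝ) → ℝ) (hw : Measurable w)
    (W : Lp ℂ 2 (volume.restrict Λ) →L[ℂ] Lp ℂ 2 (volume.restrict Λ))
    (hW : ∀ φ : Lp ℂ 2 (volume.restrict Λ), (W φ : (Fin n → ℝ) → ℂ) =ᵐ[volume.restrict Λ] fun p => (w p : ℂ) * φ p)
    (h : ℕ → Lp ℂ 2 (volume.restrict Λ))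
    (hd : ∀ φ, M.meas (W φ) univ = ∫⁻ x, ∑' k, ‖⟪h k, U (-x) φ⟫‖ₑ ^ 2) :
    ∀ᵐ p ∂(volume.restrict Λ), ENNReal.ofReal ((2 * Real.pi) ^ n) * ∑' k, ‖h k p‖ₑ ^ 2 = ‖w p‖ₑ ^ 2 := by
  have hm : ∀ k, Measurable fun p => ‖h k p‖ₑ ^ 2 := fun k =>
    (Lp.stronglyMeasurable (h k)).measurable.enorm.pow_const 2
  apply ae_eq_of_forall_setLIntegral_eq_of_sigmaFinite
  · exact (Measurable.tsum hm).const_mul _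
  · exact hw.enorm.pow_const 2
  intro S hS hμ
  have h1 := hd (indicatorConstLp 2 hS hμ.ne (1 : ℂ))
  have hmU : ∀ k φ, AEMeasurable (fun x => ‖⟪h k, U (-x) φ⟫‖ₑ ^ 2) volume := by
    intro k φ
    exact (((contU hU (h k) φ).comp continuous_neg).measurable.enorm.pow_const 2).aemeasurable
  rw [M.meas_univ, lintegral_tsum (fun k => hmU k _)] at h1
  rw [lintegral_const_mul' _ _ ENNReal.ofReal_ne_top, lintegral_tsum (fun k => (hm k).aemeasurable),
    ← ENNReal.tsum_mul_left]
  simp_rw [← plan_ind hΛ hU _ hS hμ.ne]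
  have h2 : ∀ k, ∫⁻ x, ‖⟪h k, U (-x) (indicatorConstLp 2 hS hμ.ne (1 : ℂ))⟫‖ₑ ^ 2 =
     ∫⁻ x, ‖⟪h k, U x (indicatorConstLp 2 hS hμ.ne (1 : ℂ))⟫‖ₑ ^ 2 := fun k =>
    lintegral_neg_eq_self (μ := (volume : Measure (Fin n → ℝ))) (fun x => ‖⟪h k, U x (indicatorConstLp 2 hS hμ.ne (1 : ℂ))⟫‖ₑ ^ 2)
  simp_rw [h2] at h1
  rw [← h1, Lp.norm_def, ENNReal.ofReal_pow ENNReal.toReal_nonneg, ENNReal.ofReal_toReal (Lp.eLpNorm_ne_top _),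
    elpnorm_sq, ← lintegral_indicator hS]
  apply lintegral_congr_ae
  filter_upwards [hW (indicatorConstLp 2 hS hμ.ne (1 : ℂ)),
    indicatorConstLp_coeFn (p := 2) (hs := hS) (hμs := hμ.ne) (c := (1 : ℂ))] with p hp hp2
  rw [hp, hp2]
  by_cases h : p ∈ S
  · simp [h, ← ofReal_norm]
  · simp [h]
end dens

section xi
open Filter Topology
open scoped ENNReal

theorem ell2_enorm (v : ell2) : ‖v‖ₑ ^ 2 = ∑' k, ‖v k‖ₑ ^ 2 := by
  have h := lp.hasSum_norm (p := 2) (by norm_num) v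
  simp only [ENNReal.toReal_ofNat, Real.rpow_ofNat] at h
  rw [← ofReal_norm, ← ENNReal.ofReal_pow (norm_nonneg _), ← h.tsum_eq,
    ENNReal.ofReal_tsum_of_nonneg (fun k => by positivity) h.summable]
  congr 1
  ext k
  rw [ENNReal.ofReal_pow (norm_nonneg _), ofReal_norm]

theorem ell2_mem (a : ℕ → ℂ) (h : ∑' k, ‖a k‖ₑ ^ 2 ≠ ∞) : Memℓp a 2 := by
  rw [memℓp_gen_iff (by norm_num)]
  simp only [ENNReal.toReal_ofNat, Real.rpow_ofNat]
  have := ENNReal.summable_toReal h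
  refine this.congr fun k => ?_
  simp

theorem xi_exists {α : Type*} [MeasurableSpace α] (μ : Measure α) (f : ℕ → α → ℂ) (hf : ∀ k, Measurable (f k))
    (h1 : ∀ᵐ p ∂μ, ∑' k, ‖f k p‖ₑ ^ 2 = 1) : ∃ ξ : α → ell2, StronglyMeasurable ξ ∧ (∀ p, ‖ξ p‖ ≤ 1) ∧
      ∀ᵐ p ∂μ, ‖ξ p‖ = 1 ∧ ∀ k, (ξ p : ℕ → ℂ) k = f k p := by
  classical
  let G : Set α := {p | ∑' k, ‖f k p‖ₑ ^ 2 = 1}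
  have mG : MeasurableSet G := measurableSet_eq_fun (Measurable.tsum fun k => (hf k).enorm.pow_const 2) measurable_const
  have hmem : ∀ p, Memℓp (fun k => if p ∈ G then f k p else 0) 2 := by
    intro p
    apply ell2_mem
    by_cases hp : p ∈ G
    · have h : ∑' k, ‖f k p‖ₑ ^ 2 = 1 := hp
      simp [hp, h]
    · simp [hp]
  let ξ : α → ell2 := fun p => ⟨fun k => if p ∈ G then f k p else 0, hmem p⟩
  have hG : ∀ p ∈ G, ‖ξ p‖ = 1 := by
    intro p hp
    have h : ∑' k, ‖f k p‖ₑ ^ 2 = 1 := hp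
    have h2 : ‖ξ p‖ₑ ^ 2 = 1 := by
      rw [ell2_enorm]
      simp [ξ, hp, h]
    rw [← ofReal_norm, ← ENNReal.ofReal_pow (norm_nonneg _), ENNReal.ofReal_eq_one] at h2
    exact (pow_eq_one_iff_of_nonneg (norm_nonneg _) two_ne_zero).1 h2
  refine ⟨ξ, ?_, ?_, ?_⟩
  · refine stronglyMeasurable_of_tendsto (f := fun N p => ∑ i ∈ Finset.range N, lp.single 2 i ((ξ p : ℕ → ℂ) i)) atTop ?_ ?_
    · intro N
      refine Finset.stronglyMeasurable_fun_sum _ fun i _ => ?_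
      have hi : Continuous fun z : ℂ => (lp.single 2 i z : ell2) := by
        refine (LinearMap.mkContinuous (lp.lsingle (𝕜 := ℂ) (E := fun _ : ℕ => ℂ) 2 i) 1 ?_).continuous
        intro z
        rw [one_mul]
        exact (lp.norm_single (by norm_num) _ _).le
      refine hi.comp_stronglyMeasurable ?_
      exact (Measurable.ite mG (hf i) measurable_const).stronglyMeasurable
    · rw [tendsto_pi_nhds]
      intro p
      exact (lp.hasSum_single (by norm_num) (ξ p)).tendsto_sum_nat
  · intro p
    by_cases hp : p ∈ G
    · exact (hG p hp).le
    · have : ξ p = 0 := by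
        ext k
        simp [ξ, hp]
      rw [this]; simp
  · filter_upwards [h1] with p hp
    exact ⟨hG p hp, fun k => if_pos hp⟩

variable {n : ℕ}

theorem chE_cont : Continuous fun z : (Fin n → ℝ) × (Fin n → ℝ) => chE z.1 z.2 := by
  unfold chE; fun_prop

noncomputable def gT (μ : Measure (Fin n → ℝ)) (ξ : (Fin n → ℝ) → ell2) (ψ : (Fin n → ℝ) → ℂ) (x : Fin n → ℝ) : ell2 :=
  ∫ p, (chE (-x) p * ψ p) • ξ p ∂μ

variable {μ : Measure (Fin n → ℝ)} {ξ : (Fin n → ℝ) → ell2} {ψ φ : (Fin n → ℝ) → ℂ}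

theorem gT_nb (hb : ∀ p, ‖ξ p‖ ≤ 1) (x p) : ‖(chE (-x) p * ψ p) • ξ p‖ ≤ ‖ψ p‖ := by
  rw [norm_smul, norm_mul, chE_norm, one_mul]
  exact mul_le_of_le_one_right (norm_nonneg _) (hb p)

theorem gT_sm (hξ : StronglyMeasurable ξ) (hψ : AEStronglyMeasurable ψ μ) (x) :
   AEStronglyMeasurable (fun p => (chE (-x) p * ψ p) • ξ p) μ :=
  ((chE_cont.comp (Continuous.prodMk_right (-x))).aestronglyMeasurable.mul hψ).smul hξ.aestronglyMeasurable

theorem gT_int (hξ : StronglyMeasurable ξ) (hb : ∀ p, ‖ξ p‖ ≤ 1) (hψ : Integrable ψ μ) (x) :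
   Integrable (fun p => (chE (-x) p * ψ p) • ξ p) μ :=
  hψ.mono (gT_sm hξ hψ.1 x) (Eventually.of_forall fun p => gT_nb hb x p)

theorem gT_add (hξ : StronglyMeasurable ξ) (hb : ∀ p, ‖ξ p‖ ≤ 1) (hψ : Integrable ψ μ) (hφ : Integrable φ μ) (x) :
   gT μ ξ (fun p => ψ p + φ p) x = gT μ ξ ψ x + gT μ ξ φ x := by
  unfold gT
  rw [← integral_add (gT_int hξ hb hψ x) (gT_int hξ hb hφ x)]
  congr 1
  ext p : 1
  rw [← add_smul, mul_add]

theorem gT_smul (a : ℂ) (x) :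
   gT μ ξ (fun p => a * ψ p) x = a • gT μ ξ ψ x := by
  unfold gT
  rw [← integral_smul]
  congr 1
  ext p : 1
  rw [smul_smul]
  ring_nf

theorem gT_congr (h : ψ =ᵐ[μ] φ) (x) : gT μ ξ ψ x = gT μ ξ φ x := by
  apply integral_congr_ae
  filter_upwards [h] with p hp
  simp only [hp]

theorem gT_norm_le (hb : ∀ p, ‖ξ p‖ ≤ 1) (hψ : Integrable ψ μ) (x) : ‖gT μ ξ ψ x‖ ≤ ∫ p, ‖ψ p‖ ∂μ :=
  norm_integral_le_of_norm_le hψ.norm (Eventually.of_forall fun p => gT_nb hb x p)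

theorem gT_cont (hξ : StronglyMeasurable ξ) (hb : ∀ p, ‖ξ p‖ ≤ 1) (hψ : Integrable ψ μ) : Continuous (gT μ ξ ψ) := by
  refine continuous_of_dominated (bound := fun p => ‖ψ p‖) (fun x => gT_sm hξ hψ.1 x)
    (fun x => Eventually.of_forall fun p => gT_nb hb x p) hψ.norm (Eventually.of_forall fun p => ?_)
  exact (((chE_cont.comp (Continuous.prodMk_left p)).comp continuous_neg).mul continuous_const).smul continuous_const

theorem gT_coord (hξ : StronglyMeasurable ξ) (hb : ∀ p, ‖ξ p‖ ≤ 1) (hψ : Integrable ψ μ) (x k) :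
   (gT μ ξ ψ x : ℕ → ℂ) k = ∫ p, chE (-x) p * ψ p * (ξ p : ℕ → ℂ) k ∂μ := by
  have h : ∀ v : ell2, ⟪(lp.single 2 k (1:ℂ) : ell2), v⟫ = (v : ℕ → ℂ) k := by
    intro v
    rw [lp.inner_single_left]; simp
  rw [← h]
  unfold gT
  rw [← integral_inner (gT_int hξ hb hψ x)]
  congr 1
  ext p
  rw [h]; simp
end xi

section rep
open Filter Topology
open scoped ENNReal

variable {n : ℕ} {Λ : Set (Fin n → ℝ)} {U : (Fin n → ℝ) →
      (Lp ℂ 2 (volume.restrict Λ) ≃ₗᵢ[ℂ] Lp ℂ 2 (volume.restrict Λ))}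
     {M : POVM (Fin n → ℝ) (Lp ℂ 2 (volume.restrict Λ))}

theorem weight_exists (n : ℕ) : ∃ w : (Fin n → ℝ) → ℝ, Measurable w ∧ (∀ p, 0 < w p) ∧ (∀ p, w p ≤ 1) ∧
    ∫⁻ p, ‖w p‖ₑ ^ 2 ≠ ∞ := by
  have hpos : ∀ p : Fin n → ℝ, 0 < (1 + ‖p‖) ^ (-((n : ℝ) + 1)) := fun p => by positivity
  have hle : ∀ p : Fin n → ℝ, (1 + ‖p‖) ^ (-((n : ℝ) + 1)) ≤ 1 := fun p =>
    Real.rpow_le_one_of_one_le_of_nonpos (by linarith [norm_nonneg p]) (by linarith [(Nat.cast_nonneg n : (0:ℝ) ≤ n)])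
  refine ⟨fun p => (1 + ‖p‖) ^ (-((n : ℝ) + 1)), by fun_prop, hpos, hle, ?_⟩
  have hi : Integrable (fun p : Fin n → ℝ => (1 + ‖p‖) ^ (-((n : ℝ) + 1))) :=
    integrable_one_add_norm (by simp)
  refine ne_top_of_le_ne_top hi.2.ne (lintegral_mono fun p => ?_)
  have : ‖(1 + ‖p‖) ^ (-((n : ℝ) + 1))‖ₑ ≤ 1 := by
    rw [← ofReal_norm, ENNReal.ofReal_le_one, Real.norm_of_nonneg (hpos p).le]
    exact hle p
  calc _ = ‖(1 + ‖p‖) ^ (-((n : ℝ) + 1))‖ₑ * ‖(1 + ‖p‖) ^ (-((n : ℝ) + 1))‖ₑ := sq _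
    _ ≤ 1 * _ := by gcongr
    _ = _ := one_mul _

theorem repr1 (hΛ : MeasurableSet Λ)
    (hU : ∀ q : Fin n → ℝ, ∀ φ : Lp ℂ 2 (volume.restrict Λ),
      (U q φ : (Fin n → ℝ) → ℂ) =ᵐ[volume.restrict Λ] fun p => chE q p * φ p)
    (hM : IsCovariantPos n Λ U M) : ∃ (ξ : (Fin n → ℝ) → ell2) (w : (Fin n → ℝ) → ℝ), Measurable w ∧ (∀ p, 0 < w p) ∧
     StronglyMeasurable ξ ∧ (∀ p, ‖ξ p‖ ≤ 1) ∧ (∀ᵐ p ∂(volume.restrict Λ), ‖ξ p‖ = 1) ∧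
     ∀ φ ψ : Lp ℂ 2 (volume.restrict Λ), ((ψ : (Fin n → ℝ) → ℂ) =ᵐ[volume.restrict Λ] fun p => (w p : ℂ) * φ p) →
      ∀ B, MeasurableSet B → M.meas ψ B = (ENNReal.ofReal ((2 * Real.pi) ^ n))⁻¹ *
        ∫⁻ x in B, ‖gT (volume.restrict Λ) ξ ψ x‖ₑ ^ 2 := by
  obtain ⟨w, mw, w0, w1, wK⟩ := weight_exists n
  have hCpos : 0 < (2 * Real.pi) ^ n := by positivity
  obtain ⟨W, hW⟩ := mulW_exists (volume.restrict Λ) w mw (fun p => by rw [abs_of_pos (w0 p)]; exact w1 p)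
  have hWK' : ∀ φ : Lp ℂ 2 (volume.restrict Λ), (∫⁻ p, ‖(W φ) p‖ₑ ∂(volume.restrict Λ)) ^ 2 ≤ (∫⁻ p, ‖w p‖ₑ ^ 2 ∂(volume.restrict Λ)) * ENNReal.ofReal (‖φ‖ ^ 2) := by
    intro φ
    refine le_of_eq_of_le ?_ (mulW_L1 (volume.restrict Λ) w mw φ)
    congr 1
    apply lintegral_congr_ae
    filter_upwards [hW φ] with p hp
    rw [hp]
  have hK : ∫⁻ p, ‖w p‖ₑ ^ 2 ∂(volume.restrict Λ) ≠ ∞ := ne_top_of_le_ne_top wK (setLIntegral_le_lintegral _ _)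
  obtain ⟨h, hh⟩ := density hΛ hU hM w W hW _ hK hWK'
  have hn := normaliz hΛ hU w mw W hW h (M := M) (fun φ => by rw [hh φ univ MeasurableSet.univ, Measure.restrict_univ])
  set s : ℝ := Real.sqrt ((2 * Real.pi) ^ n) with hs
  have hs2 : ‖(s : ℂ)‖ₑ ^ 2 = ENNReal.ofReal ((2 * Real.pi) ^ n) := by
    rw [← ofReal_norm, ← ENNReal.ofReal_pow (norm_nonneg _), Complex.norm_real, Real.norm_eq_abs, sq_abs, hs, Real.sq_sqrt hCpos.le]
  obtain ⟨ξ, sξ, bξ, aξ⟩ := xi_exists (volume.restrict Λ) (fun k p => (s : ℂ) * conj (h k p) / (w p : ℂ))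
    (fun k => by
      have := (Lp.stronglyMeasurable (h k)).measurable
      have h2 := Complex.measurable_ofReal.comp mw
      exact (measurable_const.mul (Complex.continuous_conj.measurable.comp this)).div h2)
    (by
      filter_upwards [hn] with p hp
      have hw0 : ‖w p‖ₑ ^ 2 ≠ 0 := by simpa using (w0 p).ne'
      have hwt : ‖w p‖ₑ ^ 2 ≠ ∞ := by simp
      have : ∀ k, ‖(s : ℂ) * conj (h k p) / (w p : ℂ)‖ₑ ^ 2 = (ENNReal.ofReal ((2 * Real.pi) ^ n) * ‖h k p‖ₑ ^ 2) * (‖w p‖ₑ ^ 2)⁻¹ := by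
        intro k
        have hwe : ‖(w p : ℂ)‖ₑ = ‖w p‖ₑ := by rw [← ofReal_norm, ← ofReal_norm, Complex.norm_real]
        have hce : ‖conj (h k p)‖ₑ = ‖h k p‖ₑ := by rw [← ofReal_norm, ← ofReal_norm, RCLike.norm_conj]
        rw [div_eq_mul_inv, enorm_mul, enorm_mul, mul_pow, mul_pow, hs2, hce, enorm_inv (by exact_mod_cast (w0 p).ne'), hwe,
          ENNReal.inv_pow]
      simp_rw [this]
      rw [ENNReal.tsum_mul_right, ENNReal.tsum_mul_left, hp, ENNReal.mul_inv_cancel hw0 hwt])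
  refine ⟨ξ, w, mw, w0, sξ, bξ, aξ.mono fun p hp => hp.1, ?_⟩
  intro φ ψ hψφ B hB
  have hψ : ψ = W φ := Lp.ext (hψφ.trans (hW φ).symm)
  have hψi : Integrable ψ (volume.restrict Λ) := by
    refine ⟨Lp.aestronglyMeasurable ψ, ?_⟩
    have := hWK' φ
    rw [← hψ] at this
    by_contra hcon
    have h3 : ∫⁻ p, ‖ψ p‖ₑ ∂(volume.restrict Λ) = ∞ := by
      by_contra h4
      exact hcon (lt_top_iff_ne_top.2 h4)
    rw [h3] at this
    simp only [ne_eq, OfNat.ofNat_ne_zero, not_false_eq_true, ENNReal.top_pow, top_le_iff] at this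
    exact ENNReal.mul_ne_top hK ENNReal.ofReal_ne_top this
  rw [hψ, hh φ B hB, ← hψ, ← lintegral_const_mul' _ _ (ENNReal.inv_ne_top.2 (by simpa using hCpos))]
  congr 1
  ext x
  rw [ell2_enorm]
  have : ∀ k, (gT (volume.restrict Λ) ξ ψ x : ℕ → ℂ) k = (s : ℂ) * ⟪h k, U (-x) φ⟫ := by
    intro k
    rw [gT_coord sξ bξ hψi, inner_U hU, ← integral_const_mul]
    apply integral_congr_ae
    filter_upwards [aξ, hψφ] with p hp1 hp2
    rw [hp1.2, hp2]
    have : (w p : ℂ) ≠ 0 := by exact_mod_cast (w0 p).ne'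
    field_simp
  simp_rw [this, enorm_mul, mul_pow, hs2]
  rw [← mul_pow (2 : ℝ) Real.pi n]
  rw [ENNReal.tsum_mul_left, ← mul_assoc, ENNReal.inv_mul_cancel (by simpa using hCpos) ENNReal.ofReal_ne_top, one_mul]

theorem repr2 (hΛ : MeasurableSet Λ)
    (hU : ∀ q : Fin n → ℝ, ∀ φ : Lp ℂ 2 (volume.restrict Λ),
      (U q φ : (Fin n → ℝ) → ℂ) =ᵐ[volume.restrict Λ] fun p => chE q p * φ p)
    (hM : IsCovariantPos n Λ U M) : ∃ (ξ : (Fin n → ℝ) → ell2),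
     StronglyMeasurable ξ ∧ (∀ p, ‖ξ p‖ ≤ 1) ∧ (∀ᵐ p ∂(volume.restrict Λ), ‖ξ p‖ = 1) ∧
     ∀ ψ : Lp ℂ 2 (volume.restrict Λ), Integrable ψ (volume.restrict Λ) →
      ∀ B, MeasurableSet B → M.meas ψ B = (ENNReal.ofReal ((2 * Real.pi) ^ n))⁻¹ *
        ∫⁻ x in B, ‖gT (volume.restrict Λ) ξ ψ x‖ₑ ^ 2 := by
  obtain ⟨ξ, w, mw, w0, sξ, bξ, aξ, hr⟩ := repr1 hΛ hU hM
  refine ⟨ξ, sξ, bξ, aξ, ?_⟩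
  have hCpos : 0 < (2 * Real.pi) ^ n := by positivity
  have hci : (ENNReal.ofReal ((2 * Real.pi) ^ n))⁻¹ ≠ ∞ := ENNReal.inv_ne_top.2 (by simpa using hCpos)
  intro ψ hψ
  let E : ℕ → Set (Fin n → ℝ) := fun j => {p | 1 / ((j : ℝ) + 1) < w p}
  have mE : ∀ j, MeasurableSet (E j) := fun j => measurableSet_lt measurable_const mw
  have hE : ∀ p, ∀ᶠ j in atTop, p ∈ E j := fun p =>
    (tendsto_one_div_add_atTop_nhds_zero_nat (𝕜 := ℝ)).eventually_lt_const (w0 p)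
  have hψj : ∀ j, MemLp ((E j).indicator ψ) 2 (volume.restrict Λ) := fun j => (Lp.memLp ψ).indicator (mE j)
  have hφj : ∀ j, MemLp (fun p => (E j).indicator ψ p / (w p : ℂ)) 2 (volume.restrict Λ) := by
    intro j
    refine MemLp.of_le_mul (c := (j : ℝ) + 1) (Lp.memLp ψ) ?_ (Eventually.of_forall fun p => ?_)
    · exact ((hψj j).1.aemeasurable.div (Complex.measurable_ofReal.comp mw).aemeasurable).aestronglyMeasurable
    · by_cases hp : p ∈ E j
      · rw [indicator_of_mem hp, norm_div, Complex.norm_real, Real.norm_of_nonneg (w0 p).le, div_eq_inv_mul]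
        gcongr
        have : 1 / ((j : ℝ) + 1) < w p := hp
        rw [inv_le_comm₀ (w0 p) (by positivity), inv_eq_one_div]
        exact this.le
      · rw [indicator_of_notMem hp]
        simp; positivity
  let Ψ : ℕ → Lp ℂ 2 (volume.restrict Λ) := fun j => (hψj j).toLp _
  have hΨ : ∀ j, (Ψ j : (Fin n → ℝ) → ℂ) =ᵐ[(volume.restrict Λ)] (E j).indicator ψ := fun j => (hψj j).coeFn_toLp
  have hrj : ∀ j B, MeasurableSet B → M.meas (Ψ j) B = (ENNReal.ofReal ((2 * Real.pi) ^ n))⁻¹ *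
        ∫⁻ x in B, ‖gT (volume.restrict Λ) ξ (Ψ j) x‖ₑ ^ 2 := by
    intro j B hB
    refine hr ((hφj j).toLp _) (Ψ j) ?_ B hB
    filter_upwards [hΨ j, (hφj j).coeFn_toLp] with p h1 h2
    rw [h1, h2]
    have : (w p : ℂ) ≠ 0 := by exact_mod_cast (w0 p).ne'
    field_simp
  have hconv : Tendsto Ψ atTop (𝓝 ψ) := by
    rw [Lp.tendsto_Lp_iff_tendsto_eLpNorm']
    have h2 : Tendsto (fun j => eLpNorm (⇑(Ψ j) - ⇑ψ) 2 (volume.restrict Λ) ^ 2) atTop (𝓝 0) := by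
      simp_rw [elpnorm_sq]
      have h0 : (0 : ℝ≥0∞) = ∫⁻ p, 0 ∂(volume.restrict Λ) := by simp
      rw [h0]
      refine tendsto_lintegral_of_dominated_convergence' (fun p => ‖ψ p‖ₑ ^ 2) ?_ ?_ ?_ ?_
      · intro j
        exact (((Lp.aestronglyMeasurable (Ψ j)).sub (Lp.aestronglyMeasurable ψ)).enorm.pow_const 2)
      · intro j
        filter_upwards [hΨ j] with p hp
        rw [Pi.sub_apply, hp]
        by_cases hpE : p ∈ E j
        · simp [hpE]
        · simp [hpE]
      · rw [← elpnorm_sq]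
        exact ENNReal.pow_ne_top (Lp.eLpNorm_ne_top ψ)
      · filter_upwards [ae_all_iff.2 hΨ] with p hp
        refine tendsto_const_nhds.congr' ?_
        filter_upwards [hE p] with j hj
        rw [Pi.sub_apply, hp, indicator_of_mem hj]
        simp
    have h3 := ((ENNReal.continuous_rpow_const (y := 1 / 2)).tendsto 0).comp h2
    rw [ENNReal.zero_rpow_of_pos (by norm_num)] at h3
    refine h3.congr fun j => ?_
    rw [Function.comp_apply, ← ENNReal.rpow_natCast, ← ENNReal.rpow_mul]
    norm_num
  have hlim1 : ∀ B, MeasurableSet B → Tendsto (fun j => M.meas (Ψ j) B) atTop (𝓝 (M.meas ψ B)) := by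
    intro B hB
    simp_rw [M.meas_apply _ hB]
    refine ENNReal.tendsto_ofReal ?_
    refine ((Complex.continuous_re.tendsto _).comp ?_)
    exact hconv.inner (((M.toFun B).continuous.tendsto _).comp hconv)
  have hg : ∀ x, Tendsto (fun j => gT (volume.restrict Λ) ξ (Ψ j) x) atTop (𝓝 (gT (volume.restrict Λ) ξ ψ x)) := by
    intro x
    simp_rw [gT_congr (hΨ _)]
    refine tendsto_integral_of_dominated_convergence (fun p => ‖ψ p‖) ?_ hψ.norm ?_ ?_
    · intro j
      exact gT_sm sξ (hψj j).1 x
    · intro j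
      refine Eventually.of_forall fun p => (gT_nb bξ x p).trans (norm_indicator_le_norm_self _ _)
    · refine Eventually.of_forall fun p => ?_
      refine tendsto_const_nhds.congr' ?_
      filter_upwards [hE p] with j hj
      rw [indicator_of_mem hj]
  have hΨi : ∀ j, Integrable (Ψ j) (volume.restrict Λ) := fun j => (hψ.indicator (mE j)).congr (hΨ j).symm
  have hfin : ∀ B, MeasurableSet B → volume B < ∞ → M.meas ψ B = (ENNReal.ofReal ((2 * Real.pi) ^ n))⁻¹ *
        ∫⁻ x in B, ‖gT (volume.restrict Λ) ξ ψ x‖ₑ ^ 2 := by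
    intro B hB hvB
    refine tendsto_nhds_unique (hlim1 B hB) ?_
    simp_rw [hrj _ B hB]
    refine ENNReal.Tendsto.const_mul ?_ (Or.inr hci)
    refine tendsto_lintegral_of_dominated_convergence (fun _ => ENNReal.ofReal ((∫ p, ‖ψ p‖ ∂(volume.restrict Λ)) ^ 2)) ?_ ?_ ?_ ?_
    · intro j
      exact (gT_cont sξ bξ (hΨi j)).enorm.measurable.pow_const 2
    · intro j
      refine Eventually.of_forall fun x => ?_
      simp only
      rw [← ofReal_norm, ← ENNReal.ofReal_pow (norm_nonneg _)]
      apply ENNReal.ofReal_le_ofReal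
      gcongr
      refine (gT_norm_le bξ (hΨi j) x).trans ?_
      apply integral_mono_ae (hΨi j).norm hψ.norm
      filter_upwards [hΨ j] with p hp
      rw [hp]
      exact norm_indicator_le_norm_self _ _
    · rw [lintegral_const, Measure.restrict_apply_univ]
      exact ENNReal.mul_ne_top ENNReal.ofReal_ne_top hvB.ne
    · refine Eventually.of_forall fun x => ?_
      exact ((ENNReal.continuous_pow 2).tendsto _).comp ((continuous_enorm.tendsto _).comp (hg x))
  intro B hB
  let ν : Measure (Fin n → ℝ) := (ENNReal.ofReal ((2 * Real.pi) ^ n))⁻¹ • volume.withDensity (fun x => ‖gT (volume.restrict Λ) ξ ψ x‖ₑ ^ 2)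
  have hν : ∀ B, MeasurableSet B → ν B = (ENNReal.ofReal ((2 * Real.pi) ^ n))⁻¹ * ∫⁻ x in B, ‖gT (volume.restrict Λ) ξ ψ x‖ₑ ^ 2 := by
    intro B hB
    simp only [ν, Measure.smul_apply, smul_eq_mul, withDensity_apply _ hB]
  rw [← hν B hB]
  let Q : ℕ → Set (Fin n → ℝ) := fun j => B ∩ Metric.closedBall 0 j
  have mQ : ∀ j, MeasurableSet (Q j) := fun j => hB.inter Metric.isClosed_closedBall.measurableSet
  have monQ : Monotone Q := fun i j hij => inter_subset_inter_right _ (Metric.closedBall_subset_closedBall (by exact_mod_cast hij))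
  have hQ : ⋃ j, Q j = B := by
    rw [← inter_iUnion, Metric.iUnion_closedBall_nat, inter_univ]
  rw [← hQ, monQ.measure_iUnion, monQ.measure_iUnion]
  congr 1
  ext j
  rw [hν _ (mQ j)]
  exact hfin _ (mQ j) ((measure_mono inter_subset_right).trans_lt measure_closedBall_lt_top)
end rep

section fin
open Filter Topology
open scoped ENNReal

variable {n : ℕ} {Λ : Set (Fin n → ℝ)} {U : (Fin n → ℝ) →
      (Lp ℂ 2 (volume.restrict Λ) ≃ₗᵢ[ℂ] Lp ℂ 2 (volume.restrict Λ))}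
     {M : POVM (Fin n → ℝ) (Lp ℂ 2 (volume.restrict Λ))}

theorem pol_int {α : Type*} [MeasurableSpace α] {μ : Measure α} {f1 f2 f3 f4 : α → ℂ} (h1 : Integrable f1 μ)
    (h2 : Integrable f2 μ) (h3 : Integrable f3 μ) (h4 : Integrable f4 μ) :
    ∫ x, (f1 x - f2 x + (f3 x - f4 x) * Complex.I) / 4 ∂μ =
      ((∫ x, f1 x ∂μ) - (∫ x, f2 x ∂μ) + ((∫ x, f3 x ∂μ) - (∫ x, f4 x ∂μ)) * Complex.I) / 4 := by
  have h12 : Integrable (fun x => f1 x - f2 x) μ := h1.sub h2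
  have h34 : Integrable (fun x => (f3 x - f4 x) * Complex.I) μ := (h3.sub h4).mul_const _
  rw [integral_div, integral_add h12 h34, integral_mul_const, integral_sub h1 h2, integral_sub h3 h4]

theorem polar {ξ : (Fin n → ℝ) → ell2} (sξ : StronglyMeasurable ξ) (bξ : ∀ p, ‖ξ p‖ ≤ 1)
    (hr : ∀ ψ : Lp ℂ 2 (volume.restrict Λ), Integrable ψ (volume.restrict Λ) →
      ∀ B, MeasurableSet B → M.meas ψ B = (ENNReal.ofReal ((2 * Real.pi) ^ n))⁻¹ *
        ∫⁻ x in B, ‖gT (volume.restrict Λ) ξ ψ x‖ₑ ^ 2)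
    (φ ψ : Lp ℂ 2 (volume.restrict Λ)) (hφ : Integrable φ (volume.restrict Λ)) (hψ : Integrable ψ (volume.restrict Λ))
    {B : Set (Fin n → ℝ)} (hB : MeasurableSet B) :
    ⟪φ, M.toFun B ψ⟫ = (((2 * Real.pi) ^ n : ℝ) : ℂ)⁻¹ *
      ∫ x in B, ⟪gT (volume.restrict Λ) ξ φ x, gT (volume.restrict Λ) ξ ψ x⟫ := by
  have hCpos : 0 < (2 * Real.pi) ^ n := by positivity
  set C := (2 * Real.pi) ^ n with hC
  obtain ⟨S, hS1, hS2⟩ := sqrt_exists (M.toFun B) (M.isPositive B hB)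
  have key : ∀ θ : Lp ℂ 2 (volume.restrict Λ), Integrable θ (volume.restrict Λ) →
      Integrable (fun x => (‖gT (volume.restrict Λ) ξ θ x‖ : ℂ) ^ 2) (volume.restrict B) ∧
      (‖S θ‖ : ℂ) ^ 2 = (C : ℂ)⁻¹ * ∫ x in B, (‖gT (volume.restrict Λ) ξ θ x‖ : ℂ) ^ 2 := by
    intro θ hθ
    have h1 := hr θ hθ B hB
    rw [M.meas_apply _ hB, hS1, selfsq, Complex.ofReal_re] at h1
    have h2 : ∀ x, ‖gT (volume.restrict Λ) ξ θ x‖ₑ ^ 2 = ENNReal.ofReal (‖gT (volume.restrict Λ) ξ θ x‖ ^ 2) := by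
      intro x
      rw [← ofReal_norm, ENNReal.ofReal_pow (norm_nonneg _)]
    simp_rw [h2] at h1
    have hm : AEStronglyMeasurable (fun x => ‖gT (volume.restrict Λ) ξ θ x‖ ^ 2) (volume.restrict B) :=
      ((gT_cont sξ bξ hθ).norm.pow 2).aestronglyMeasurable
    have hne : ∫⁻ x in B, ENNReal.ofReal (‖gT (volume.restrict Λ) ξ θ x‖ ^ 2) ≠ ∞ := by
      intro hcon
      rw [hcon, ENNReal.mul_top (by simp)] at h1
      exact ENNReal.ofReal_ne_top h1
    have hi : Integrable (fun x => ‖gT (volume.restrict Λ) ξ θ x‖ ^ 2) (volume.restrict B) := by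
      rw [← lintegral_ofReal_ne_top_iff_integrable hm (Eventually.of_forall fun x => by positivity)]
      exact hne
    refine ⟨by simpa using hi.ofReal (𝕜 := ℂ), ?_⟩
    rw [← ofReal_integral_eq_lintegral_ofReal hi (Eventually.of_forall fun x => by positivity),
      ← ENNReal.ofReal_inv_of_pos hCpos, ← ENNReal.ofReal_mul (by positivity)] at h1
    have h3 := (ENNReal.ofReal_eq_ofReal_iff (by positivity)
      (mul_nonneg (by positivity) (integral_nonneg fun x => by positivity))).1 h1
    have h4 : ∫ x in B, (‖gT (volume.restrict Λ) ξ θ x‖ : ℂ) ^ 2 = ((∫ x in B, ‖gT (volume.restrict Λ) ξ θ x‖ ^ 2 : ℝ) : ℂ) := by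
      rw [← integral_complex_ofReal]
      simp
    rw [h4]
    exact_mod_cast h3
  have lin : ∀ a : ℂ, Integrable ((φ + a • ψ : Lp ℂ 2 (volume.restrict Λ)) : (Fin n → ℝ) → ℂ) (volume.restrict Λ) ∧
     ∀ x, gT (volume.restrict Λ) ξ (φ + a • ψ : Lp ℂ 2 (volume.restrict Λ)) x = gT (volume.restrict Λ) ξ φ x + a • gT (volume.restrict Λ) ξ ψ x := by
    intro a
    have h : ((φ + a • ψ : Lp ℂ 2 (volume.restrict Λ)) : (Fin n → ℝ) → ℂ) =ᵐ[volume.restrict Λ] fun p => φ p + a * ψ p := by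
      filter_upwards [Lp.coeFn_add φ (a • ψ), Lp.coeFn_smul a ψ] with p h1 h2
      rw [h1, Pi.add_apply, h2]; simp
    refine ⟨(hφ.add (hψ.const_mul a)).congr h.symm, fun x => ?_⟩
    rw [gT_congr h, gT_add sξ bξ hφ (hψ.const_mul a), gT_smul]
  have k1 := key _ (lin 1).1
  have k2 := key _ (lin (-1)).1
  have k3 := key _ (lin Complex.I).1
  have k4 := key _ (lin (-Complex.I)).1
  simp_rw [(lin _).2] at k1 k2 k3 k4
  simp only [map_add, map_sub, map_smul, one_smul, neg_smul, ← sub_eq_add_neg] at k1 k2 k3 k4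
  rw [hS1, inner_eq_sum_norm_sq_div_four]
  simp_rw [inner_eq_sum_norm_sq_div_four (𝕜 := ℂ) (gT _ _ _ _)]
  simp only [RCLike.I_to_complex, Complex.coe_algebraMap] at *
  rw [pol_int k1.1 k2.1 k4.1 k3.1, k1.2, k2.2, k3.2, k4.2]
  ring

theorem gT_inner {ξ : (Fin n → ℝ) → ell2} (sξ : StronglyMeasurable ξ) (bξ : ∀ p, ‖ξ p‖ ≤ 1)
    {φ ψ : (Fin n → ℝ) → ℂ} (hφ : Integrable φ (volume.restrict Λ)) (hψ : Integrable ψ (volume.restrict Λ)) (x : Fin n → ℝ) :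
    (∫ p₁, (∫ p₂, Complex.exp (Complex.I * (∑ k, x k * (p₁ k - p₂ k))) *
                    ⟪ξ p₁, ξ p₂⟫ * conj (φ p₁) * ψ p₂
                  ∂(volume.restrict Λ)) ∂(volume.restrict Λ)) =
     ⟪gT (volume.restrict Λ) ξ φ x, gT (volume.restrict Λ) ξ ψ x⟫ := by
  have h1 : ∀ v : ell2, ⟪v, gT (volume.restrict Λ) ξ ψ x⟫ = ∫ p₂, chE (-x) p₂ * ψ p₂ * ⟪v, ξ p₂⟫ ∂(volume.restrict Λ) := by
    intro v
    unfold gT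
    rw [← integral_inner (gT_int sξ bξ hψ x)]
    simp_rw [inner_smul_right]
  have h2 : ∀ v : ell2, ⟪gT (volume.restrict Λ) ξ φ x, v⟫ = ∫ p, conj (chE (-x) p * φ p) * ⟪ξ p, v⟫ ∂(volume.restrict Λ) := by
    intro v
    rw [← inner_conj_symm]
    unfold gT
    rw [← integral_inner (gT_int sξ bξ hφ x), ← integral_conj]
    congr 1
    ext p
    rw [inner_smul_right, map_mul, inner_conj_symm]
  rw [h2]
  congr 1
  ext p₁
  rw [h1, ← integral_const_mul]
  congr 1
  ext p₂
  have h3 : Complex.exp (Complex.I * (∑ k, x k * (p₁ k - p₂ k))) = conj (chE (-x) p₁) * chE (-x) p₂ := by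
    unfold chE
    rw [← Complex.exp_conj, ← Complex.exp_add]
    congr 1
    simp only [map_mul, Complex.conj_I, Complex.conj_ofReal]
    push_cast
    simp only [mul_sub, Finset.sum_sub_distrib, Pi.neg_apply, Complex.ofReal_neg, neg_mul, Finset.sum_neg_distrib]
    ring
  rw [h3, map_mul]
  ring
end fin

theorem stmt1 (n : ℕ) (hn : 1 ≤ n) (Λ : Set (Fin n → ℝ)) (hΛmeas : MeasurableSet Λ)
    (hΛpos : 0 < volume Λ)
    (U : (Fin n → ℝ) →
      (Lp ℂ 2 (volume.restrict Λ) ≃ₗᵢ[ℂ] Lp ℂ 2 (volume.restrict Λ)))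
    (hU : ∀ q : Fin n → ℝ, ∀ φ : Lp ℂ 2 (volume.restrict Λ),
      (U q φ : (Fin n → ℝ) → ℂ) =ᵐ[volume.restrict Λ]
        fun p => Complex.exp (Complex.I * (∑ k, q k * p k)) * φ p)
    (M : POVM (Fin n → ℝ) (Lp ℂ 2 (volume.restrict Λ)))
    (hM : IsCovariantPos n Λ U M) :
    ∃ ξ : (Fin n → ℝ) → ell2,
      (∀ e : ell2, Measurable fun p => ⟪e, ξ p⟫) ∧
      (∀ᵐ p ∂(volume.restrict Λ), ‖ξ p‖ = 1) ∧
      ∀ φ ψ : (Fin n → ℝ) → ℂ,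
        Integrable φ (volume.restrict Λ) → Integrable ψ (volume.restrict Λ) →
        ∀ (hφ : MemLp φ 2 (volume.restrict Λ)) (hψ : MemLp ψ 2 (volume.restrict Λ)),
        ∀ B : Set (Fin n → ℝ), MeasurableSet B →
          ⟪hφ.toLp φ, M.toFun B (hψ.toLp ψ)⟫
            = (((2 * Real.pi) ^ n : ℝ) : ℂ)⁻¹ *
              ∫ x in B, (∫ p₁, (∫ p₂,
                  Complex.exp (Complex.I * (∑ k, x k * (p₁ k - p₂ k))) *
                    ⟪ξ p₁, ξ p₂⟫ * conj (φ p₁) * ψ p₂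
                  ∂(volume.restrict Λ)) ∂(volume.restrict Λ)) := by
  have hU' : ∀ q : Fin n → ℝ, ∀ φ : Lp ℂ 2 (volume.restrict Λ),
      (U q φ : (Fin n → ℝ) → ℂ) =ᵐ[volume.restrict Λ] fun p => chE q p * φ p := by
    intro q φ
    filter_upwards [hU q φ] with p hp
    rw [hp]
    unfold chE
    push_cast
    rfl
  obtain ⟨ξ, sξ, bξ, aξ, hr⟩ := repr2 hΛmeas hU' hM
  refine ⟨ξ, ?_, aξ, ?_⟩
  · intro e
    have hc : Continuous fun v : ell2 => ⟪e, v⟫ := by fun_prop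
    exact (hc.comp_stronglyMeasurable sξ).measurable
  · intro φ ψ iφ iψ hφ hψ B hB
    simp_rw [gT_inner sξ bξ iφ iψ]
    rw [polar sξ bξ hr _ _ (iφ.congr hφ.coeFn_toLp.symm) (iψ.congr hψ.coeFn_toLp.symm) hB]
    simp_rw [gT_congr hφ.coeFn_toLp, gT_congr hψ.coeFn_toLp]
end

section
/- Let n ≥ 1, let Λ ⊆ ℝⁿ be a Borel set of positive Lebesgue measure, and let ξ: Λ → ℓ²(ℕ) be a weakly measurable map with ‖ξ(p)‖ = 1 for almost every p ∈ Λ. Then there exists a unique POVM M on (ℝⁿ, ℬ(ℝⁿ)) acting on L²(Λ) such that for all φ, ψ ∈ (L¹ ∩ L²)(Λ) and all Borel B ⊆ ℝⁿ: ⟨φ, M(B)ψ⟩ = (2π)^{−n} ∫_B ∫_Λ ∫_Λ e^{i(x|p₁−p₂)} ⟨ξ(p₁), ξ(p₂)⟩ conj(φ(p₁)) ψ(p₂) dp₁ dp₂ dx, and this M is covariant under U_Λ, i.e. U_Λ(q) M(B) U_Λ(q)* = M(B + q) for all q ∈ ℝⁿ and all Borel B ⊆ ℝⁿ. -/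
open MeasureTheory Set
open scoped ComplexConjugate

local notation "⟪" x ", " y "⟫" => @inner ℂ _ _ x y

/-- The matrix elements of `M` on `(L¹ ∩ L²)(Λ)` are given by the kernel determined by `ξ`. -/
def MatrixFormula (n : ℕ) (Λ : Set (Fin n → ℝ)) (ξ : (Fin n → ℝ) → ell2)
    (M : POVM (Fin n → ℝ) (Lp ℂ 2 (volume.restrict Λ))) : Prop :=
  ∀ φ ψ : (Fin n → ℝ) → ℂ,
    Integrable φ (volume.restrict Λ) → Integrable ψ (volume.restrict Λ) →
    ∀ (hφ : MemLp φ 2 (volume.restrict Λ)) (hψ : MemLp ψ 2 (volume.restrict Λ)),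
    ∀ B : Set (Fin n → ℝ), MeasurableSet B →
      ⟪hφ.toLp φ, M.toFun B (hψ.toLp ψ)⟫
        = (((2 * Real.pi) ^ n : ℝ) : ℂ)⁻¹ *
          ∫ x in B, (∫ p₁, (∫ p₂,
              Complex.exp (Complex.I * (∑ k, x k * (p₁ k - p₂ k))) *
                ⟪ξ p₁, ξ p₂⟫ * conj (φ p₁) * ψ p₂
              ∂(volume.restrict Λ)) ∂(volume.restrict Λ))

section Helpers

open FourierTransform SchwartzMap

/-- The `L²` Fourier transform agrees a.e. with the Fourier integral on `L¹ ∩ L²`. -/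
lemma aux_fourier_toLp {E F : Type*} [NormedAddCommGroup E] [InnerProductSpace ℝ E]
    [FiniteDimensional ℝ E] [MeasurableSpace E] [BorelSpace E]
    [NormedAddCommGroup F] [InnerProductSpace ℂ F] [CompleteSpace F]
    (f : E → F) (h1 : Integrable f volume) (h2 : MemLp f 2 volume) :
    ((𝓕 (h2.toLp f) : Lp F 2 (volume : Measure E)) : E → F) =ᵐ[volume] 𝓕 f := by
  refine ae_eq_of_integral_contDiff_smul_eq ?_ ?_ ?_
  · exact (Lp.memLp _).locallyIntegrable (by norm_num)
  · exact (VectorFourier.fourierIntegral_continuous Real.continuous_fourierChar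
      (L := innerₗ E) continuous_inner h1).locallyIntegrable
  · intro g hg hc
    have hc' : HasCompactSupport (fun x => (g x : ℂ)) :=
      hc.comp_left (g := fun r : ℝ => (r : ℂ)) (by simp)
    let G : 𝓢(E, ℂ) := hc'.toSchwartzMap (Complex.ofRealCLM.contDiff.comp hg)
    have hG : ∀ x, G x = (g x : ℂ) := fun x => rfl
    have key := congrArg (fun T => T G) (Lp.fourier_toTemperedDistribution_eq (h2.toLp f))
    simp only [TemperedDistribution.fourier_apply, Lp.toTemperedDistribution_apply] at key
    have e1 : ∫ x, g x • (𝓕 (h2.toLp f) : Lp F 2 (volume : Measure E)) x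
        = ∫ x, G x • (𝓕 (h2.toLp f) : Lp F 2 (volume : Measure E)) x := by
      simp [hG]
    rw [e1, ← key]
    have e2 : ∫ x, (𝓕 G) x • (h2.toLp f) x = ∫ x, (𝓕 (G : E → ℂ)) x • f x := by
      refine integral_congr_ae ?_
      filter_upwards [h2.coeFn_toLp] with x hx
      rw [hx, SchwartzMap.fourier_coe]
    rw [e2]
    have := VectorFourier.integral_bilin_fourierIntegral_eq_flip (.lsmul ℂ ℂ) (L := innerₗ E)
      (μ := volume) (ν := volume)
      Real.continuous_fourierChar continuous_inner G.integrable h1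
    simpa [hG] using! this

lemma aux_stronglyMeasurable {α : Type*} [MeasurableSpace α] (ξ : α → ell2)
    (h : ∀ e : ell2, Measurable fun p => ⟪e, ξ p⟫) : StronglyMeasurable ξ := by
  have hc : ∀ i, Measurable fun p => (ξ p : ℕ → ℂ) i := by
    intro i
    have := h (lp.single 2 i (1 : ℂ))
    simpa [lp.inner_single_left] using this
  refine stronglyMeasurable_of_tendsto (f := fun (N : ℕ) p => ∑ i ∈ Finset.range N,
    (lp.single 2 i ((ξ p : ℕ → ℂ) i) : ell2)) Filter.atTop ?_ ?_
  · intro N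
    refine Finset.stronglyMeasurable_fun_sum _ fun i _ => ?_
    have : (fun p => (lp.single 2 i ((ξ p : ℕ → ℂ) i) : ell2))
        = fun p => (ξ p : ℕ → ℂ) i • (lp.single 2 i (1 : ℂ) : ell2) := by
      ext1 p
      rw [← lp.single_smul]; simp
    rw [this]
    exact (hc i).stronglyMeasurable.smul_const _
  · rw [tendsto_pi_nhds]
    intro p
    exact (lp.hasSum_single (p := 2) (by norm_num) (ξ p)).tendsto_sum_nat

lemma aux_dense {α : Type*} [MeasurableSpace α] (μ : Measure α) :
    Dense {f : Lp ℂ 2 μ | Integrable f μ} := by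
  have hd := Lp.simpleFunc.denseRange (E := ℂ) (μ := μ) (p := 2) (by norm_num)
  refine hd.mono ?_
  rintro _ ⟨f, rfl⟩
  have h1 : Integrable (Lp.simpleFunc.toSimpleFunc f) μ :=
    (SimpleFunc.memLp_iff_integrable (p := 2) (by norm_num) (by norm_num)).1
      (Lp.simpleFunc.memLp f)
  exact h1.congr (Lp.simpleFunc.toSimpleFunc_eq_toFun f)

lemma aux_ext {α : Type*} [MeasurableSpace α] (μ : Measure α)
    (T S : Lp ℂ 2 μ →L[ℂ] Lp ℂ 2 μ)
    (h : ∀ φ ψ : Lp ℂ 2 μ, Integrable φ μ → Integrable ψ μ → ⟪φ, T ψ⟫ = ⟪φ, S ψ⟫) :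
    T = S := by
  have h1 : ∀ ψ : Lp ℂ 2 μ, Integrable ψ μ → T ψ = S ψ := by
    intro ψ hψ
    refine ext_inner_left ℂ fun φ => ?_
    exact congrFun (Continuous.ext_on (aux_dense μ) (by fun_prop) (by fun_prop)
      (fun φ hφ => h φ ψ hφ hψ) : (fun φ => ⟪φ, T ψ⟫) = fun φ => ⟪φ, S ψ⟫) φ
  ext1 ψ
  exact congrFun (Continuous.ext_on (aux_dense μ) T.continuous S.continuous h1) ψ

/-- The operator `V* 1_B V`. -/
noncomputable def auxOp {H E F : Type*} [NormedAddCommGroup H] [InnerProductSpace ℂ H]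
    [CompleteSpace H] [MeasurableSpace E] (ν : Measure E)
    [NormedAddCommGroup F] [InnerProductSpace ℂ F] [CompleteSpace F]
    (V : H →ₗᵢ[ℂ] Lp F 2 ν) (B : Set E) : H →L[ℂ] H :=
  (ContinuousLinearMap.adjoint ((LpToLpRestrictCLM E F ℂ ν 2 B).comp V.toContinuousLinearMap)).comp
    ((LpToLpRestrictCLM E F ℂ ν 2 B).comp V.toContinuousLinearMap)

lemma auxOp_inner {H E F : Type*} [NormedAddCommGroup H] [InnerProductSpace ℂ H]
    [CompleteSpace H] [MeasurableSpace E] (ν : Measure E)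
    [NormedAddCommGroup F] [InnerProductSpace ℂ F] [CompleteSpace F]
    (V : H →ₗᵢ[ℂ] Lp F 2 ν) (B : Set E) (φ ψ : H) :
    ⟪φ, auxOp ν V B ψ⟫ = ∫ y in B, ⟪V φ y, V ψ y⟫ ∂ν := by
  rw [auxOp, ContinuousLinearMap.comp_apply, ContinuousLinearMap.adjoint_inner_right, L2.inner_def]
  refine integral_congr_ae ?_
  filter_upwards [LpToLpRestrictCLM_coeFn ℂ B (V φ), LpToLpRestrictCLM_coeFn ℂ B (V ψ)]
    with y h1 h2
  simp only [ContinuousLinearMap.comp_apply, LinearIsometry.coe_toContinuousLinearMap]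
  rw [h1, h2]

/-- The POVM `B ↦ V* 1_{g⁻¹ B} V`. -/
noncomputable def auxPOVM {H E F Ω : Type*} [NormedAddCommGroup H] [InnerProductSpace ℂ H]
    [CompleteSpace H] [MeasurableSpace E] [MeasurableSpace Ω] (ν : Measure E)
    [NormedAddCommGroup F] [InnerProductSpace ℂ F] [CompleteSpace F]
    (V : H →ₗᵢ[ℂ] Lp F 2 ν) (g : E → Ω) (hg : Measurable g) : POVM Ω H where
  toFun B := auxOp ν V (g ⁻¹' B)
  isPositive B _ := ContinuousLinearMap.isPositive_adjoint_comp_self _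
  normalized := by
    ext1 ψ
    refine ext_inner_left ℂ fun φ => ?_
    rw [auxOp_inner, preimage_univ, Measure.restrict_univ, ← L2.inner_def, V.inner_map_map]
    rfl
  m_iUnion B hB hd φ ψ := by
    simp only [auxOp_inner, preimage_iUnion]
    refine hasSum_integral_iUnion (fun k => hg (hB k)) ?_ ?_
    · intro i j hij
      exact (hd hij).preimage g
    · exact (L2.integrable_inner (𝕜 := ℂ) (V φ) (V ψ)).integrableOn

end Helpers

section Helpers2

open FourierTransform

variable {n : ℕ}

/-- Extension by zero of `ψ ξ` transported to Euclidean space. -/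
noncomputable def auxLift (Λ : Set (Fin n → ℝ)) (ξ : (Fin n → ℝ) → ell2)
    (ψ : (Fin n → ℝ) → ℂ) : EuclideanSpace ℝ (Fin n) → ell2 :=
  (Λ.indicator fun p => ψ p • ξ p) ∘ (WithLp.ofLp)

lemma aux_mp : MeasurePreserving (WithLp.ofLp : EuclideanSpace ℝ (Fin n) → (Fin n → ℝ)) :=
  PiLp.volume_preserving_ofLp (Fin n)

lemma aux_emb : MeasurableEmbedding (WithLp.ofLp : EuclideanSpace ℝ (Fin n) → (Fin n → ℝ)) :=
  (MeasurableEquiv.toLp 2 (Fin n → ℝ)).symm.measurableEmbedding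

lemma aux_smul_meas {Λ : Set (Fin n → ℝ)} {ξ : (Fin n → ℝ) → ell2} (hξ : StronglyMeasurable ξ)
    {ψ : (Fin n → ℝ) → ℂ} (hψ : AEStronglyMeasurable ψ (volume.restrict Λ)) :
    AEStronglyMeasurable (fun p => ψ p • ξ p) (volume.restrict Λ) :=
  hψ.smul hξ.aestronglyMeasurable

lemma aux_lift_memLp {Λ : Set (Fin n → ℝ)} (hΛ : MeasurableSet Λ) {ξ : (Fin n → ℝ) → ell2}
    (hξ : StronglyMeasurable ξ) (hξn : ∀ᵐ p ∂(volume.restrict Λ), ‖ξ p‖ = 1)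
    {ψ : (Fin n → ℝ) → ℂ} (q : ENNReal) (hψ : AEStronglyMeasurable ψ (volume.restrict Λ)) :
    AEStronglyMeasurable (auxLift Λ ξ ψ) volume ∧
    eLpNorm (auxLift Λ ξ ψ) q volume = eLpNorm ψ q (volume.restrict Λ) := by
  have h0 : AEStronglyMeasurable (Λ.indicator fun p => ψ p • ξ p) volume :=
    (aestronglyMeasurable_indicator_iff hΛ).2 (aux_smul_meas hξ hψ)
  refine ⟨h0.comp_measurePreserving aux_mp, ?_⟩
  rw [auxLift, eLpNorm_comp_measurePreserving h0 aux_mp,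
    eLpNorm_indicator_eq_eLpNorm_restrict hΛ]
  refine eLpNorm_congr_norm_ae ?_
  filter_upwards [hξn] with p hp
  rw [norm_smul, hp, mul_one]

lemma aux_lift_congr {Λ : Set (Fin n → ℝ)} (hΛ : MeasurableSet Λ) (ξ : (Fin n → ℝ) → ell2)
    {ψ ψ' : (Fin n → ℝ) → ℂ} (h : ψ =ᵐ[volume.restrict Λ] ψ') :
    auxLift Λ ξ ψ =ᵐ[volume] auxLift Λ ξ ψ' := by
  have : Λ.indicator (fun p => ψ p • ξ p) =ᵐ[volume] Λ.indicator (fun p => ψ' p • ξ p) := by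
    rw [Filter.EventuallyEq, ae_restrict_iff' hΛ] at h
    filter_upwards [h] with p hp
    by_cases hm : p ∈ Λ
    · simp [hm, hp hm]
    · simp [hm]
  exact aux_mp.quasiMeasurePreserving.ae_eq_comp this

lemma aux_lift_mem2 {Λ : Set (Fin n → ℝ)} (hΛ : MeasurableSet Λ) {ξ : (Fin n → ℝ) → ell2}
    (hξ : StronglyMeasurable ξ) (hξn : ∀ᵐ p ∂(volume.restrict Λ), ‖ξ p‖ = 1)
    {ψ : (Fin n → ℝ) → ℂ} {q : ENNReal} (hψ : MemLp ψ q (volume.restrict Λ)) :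
    MemLp (auxLift Λ ξ ψ) q volume :=
  ⟨(aux_lift_memLp hΛ hξ hξn q hψ.1).1, (aux_lift_memLp hΛ hξ hξn q hψ.1).2 ▸ hψ.2⟩

/-- The isometric embedding `ψ ↦ ψ ξ` of `L²(Λ)`. -/
noncomputable def auxJ {Λ : Set (Fin n → ℝ)} (hΛ : MeasurableSet Λ) {ξ : (Fin n → ℝ) → ell2}
    (hξ : StronglyMeasurable ξ) (hξn : ∀ᵐ p ∂(volume.restrict Λ), ‖ξ p‖ = 1) :
    Lp ℂ 2 (volume.restrict Λ) →ₗᵢ[ℂ] Lp ell2 2 (volume : Measure (EuclideanSpace ℝ (Fin n))) where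
  toFun ψ := (aux_lift_mem2 hΛ hξ hξn (Lp.memLp ψ)).toLp _
  map_add' φ ψ := by
    rw [← MemLp.toLp_add]
    refine MemLp.toLp_congr _ _ ?_
    refine (aux_lift_congr hΛ ξ (Lp.coeFn_add φ ψ)).trans (Filter.Eventually.of_forall fun v => ?_)
    by_cases hm : WithLp.ofLp v ∈ Λ
    · simp [auxLift, hm, add_smul]
    · simp [auxLift, hm]
  map_smul' c ψ := by
    rw [RingHom.id_apply, ← MemLp.toLp_const_smul]
    refine MemLp.toLp_congr _ _ ?_
    refine (aux_lift_congr hΛ ξ (Lp.coeFn_smul c ψ)).trans (Filter.Eventually.of_forall fun v => ?_)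
    by_cases hm : WithLp.ofLp v ∈ Λ
    · simp [auxLift, hm, smul_smul]
    · simp [auxLift, hm]
  norm_map' ψ := by
    simp only [LinearMap.coe_mk, AddHom.coe_mk]
    rw [Lp.norm_toLp, (aux_lift_memLp hΛ hξ hξn 2 (Lp.memLp ψ).1).2, Lp.norm_def]

/-- The Fourier integral of `ψ ξ`. -/
noncomputable def auxF (Λ : Set (Fin n → ℝ)) (ξ : (Fin n → ℝ) → ell2)
    (ψ : (Fin n → ℝ) → ℂ) (x : Fin n → ℝ) : ell2 :=
  ∫ p in Λ, (Complex.exp (-(Complex.I * ((∑ k, x k * p k : ℝ) : ℂ))) * ψ p) • ξ p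

lemma aux_fourier_lift {Λ : Set (Fin n → ℝ)} (hΛ : MeasurableSet Λ) (ξ : (Fin n → ℝ) → ell2)
    (ψ : (Fin n → ℝ) → ℂ) (y : EuclideanSpace ℝ (Fin n)) :
    𝓕 (auxLift Λ ξ ψ) y = auxF Λ ξ ψ ((2 * Real.pi) • WithLp.ofLp y) := by
  rw [Real.fourier_eq', auxF, ← integral_indicator hΛ, ← aux_mp.integral_comp aux_emb]
  refine integral_congr_ae (Filter.Eventually.of_forall fun v => ?_)
  by_cases hm : WithLp.ofLp v ∈ Λ
  · simp only [auxLift, Function.comp, hm, indicator_of_mem, smul_smul]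
    congr 3
    simp only [PiLp.inner_apply, Pi.smul_apply, smul_eq_mul]
    push_cast
    rw [Finset.mul_sum, Finset.sum_mul, Finset.mul_sum, ← Finset.sum_neg_distrib]
    refine Finset.sum_congr rfl fun k _ => ?_
    simp
    ring
  · simp [auxLift, hm]

lemma aux_integrable {Λ : Set (Fin n → ℝ)} {ξ : (Fin n → ℝ) → ell2}
    (hξ : StronglyMeasurable ξ) (hξn : ∀ᵐ p ∂(volume.restrict Λ), ‖ξ p‖ = 1)
    {ψ : (Fin n → ℝ) → ℂ} (hψ : Integrable ψ (volume.restrict Λ)) (x : Fin n → ℝ) :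
    Integrable (fun p => (Complex.exp (-(Complex.I * ((∑ k, x k * p k : ℝ) : ℂ))) * ψ p) • ξ p)
      (volume.restrict Λ) := by
  have hm : AEStronglyMeasurable (fun p : Fin n → ℝ =>
      Complex.exp (-(Complex.I * ((∑ k, x k * p k : ℝ) : ℂ)))) (volume.restrict Λ) :=
    Continuous.aestronglyMeasurable (by fun_prop)
  refine hψ.norm.mono' ((hm.mul hψ.1).smul hξ.aestronglyMeasurable) ?_
  filter_upwards [hξn] with p hp
  rw [norm_smul, hp, mul_one, norm_mul, Complex.norm_exp]
  simp

lemma aux_double {Λ : Set (Fin n → ℝ)} {ξ : (Fin n → ℝ) → ell2}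
    (hξ : StronglyMeasurable ξ) (hξn : ∀ᵐ p ∂(volume.restrict Λ), ‖ξ p‖ = 1)
    {φ ψ : (Fin n → ℝ) → ℂ} (hφ : Integrable φ (volume.restrict Λ))
    (hψ : Integrable ψ (volume.restrict Λ)) (x : Fin n → ℝ) :
    (∫ p₁, (∫ p₂, Complex.exp (Complex.I * (∑ k, x k * (p₁ k - p₂ k))) *
                ⟪ξ p₁, ξ p₂⟫ * conj (φ p₁) * ψ p₂
              ∂(volume.restrict Λ)) ∂(volume.restrict Λ)) = ⟪auxF Λ ξ φ x, auxF Λ ξ ψ x⟫ := by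
  have h1 : ∀ p₁, (∫ p₂, Complex.exp (Complex.I * (∑ k, x k * (p₁ k - p₂ k))) *
                ⟪ξ p₁, ξ p₂⟫ * conj (φ p₁) * ψ p₂ ∂(volume.restrict Λ))
      = ⟪(Complex.exp (-(Complex.I * ((∑ k, x k * p₁ k : ℝ) : ℂ))) * φ p₁) • ξ p₁,
          auxF Λ ξ ψ x⟫ := by
    intro p₁
    rw [auxF, ← integral_inner (aux_integrable hξ hξn hψ x)]
    refine integral_congr_ae (Filter.Eventually.of_forall fun p₂ => ?_)
    simp only
    rw [inner_smul_left, inner_smul_right, map_mul, ← Complex.exp_conj]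
    have : Complex.exp (Complex.I * (∑ k, x k * (p₁ k - p₂ k))) =
        Complex.exp (conj (-(Complex.I * ((∑ k, x k * p₁ k : ℝ) : ℂ)))) *
          Complex.exp (-(Complex.I * ((∑ k, x k * p₂ k : ℝ) : ℂ))) := by
      rw [← Complex.exp_add]
      congr 1
      simp only [map_neg, map_mul, Complex.conj_I, Complex.conj_ofReal]
      push_cast
      simp only [mul_sub, Finset.sum_sub_distrib]
      ring
    rw [this]
    ring
  simp_rw [h1]
  rw [← inner_conj_symm (auxF Λ ξ φ x)]
  rw [show auxF Λ ξ φ x = ∫ p in Λ, (Complex.exp (-(Complex.I * ((∑ k, x k * p k : ℝ) : ℂ))) *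
    φ p) • ξ p from rfl]
  rw [← integral_inner (aux_integrable hξ hξn hφ x), ← integral_conj]
  simp_rw [inner_conj_symm]

lemma aux_change (h : (Fin n → ℝ) → ℂ) {B : Set (Fin n → ℝ)} (hB : MeasurableSet B) :
    ∫ y in (fun y : EuclideanSpace ℝ (Fin n) => (2 * Real.pi) • WithLp.ofLp y) ⁻¹' B,
      h ((2 * Real.pi) • WithLp.ofLp y)
      = (((2 * Real.pi) ^ n : ℝ) : ℂ)⁻¹ * ∫ x in B, h x := by
  have hmeas : Measurable (fun y : EuclideanSpace ℝ (Fin n) => (2 * Real.pi) • WithLp.ofLp y) :=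
    aux_mp.measurable.const_smul (2 * Real.pi)
  rw [← integral_indicator (hmeas hB), ← integral_indicator hB]
  have e : ∀ y : EuclideanSpace ℝ (Fin n),
      ((fun y : EuclideanSpace ℝ (Fin n) => (2 * Real.pi) • WithLp.ofLp y) ⁻¹' B).indicator
        (fun y => h ((2 * Real.pi) • WithLp.ofLp y)) y
      = (fun x => B.indicator h ((2 * Real.pi) • x)) (WithLp.ofLp y) := fun y => rfl
  simp_rw [e]
  rw [aux_mp.integral_comp aux_emb (fun x => B.indicator h ((2 * Real.pi) • x)),
    Measure.integral_comp_smul_of_nonneg volume (B.indicator h) _ (hR := by positivity)]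
  simp

lemma aux_exists {Λ : Set (Fin n → ℝ)} (hΛ : MeasurableSet Λ) {ξ : (Fin n → ℝ) → ell2}
    (hξ : StronglyMeasurable ξ) (hξn : ∀ᵐ p ∂(volume.restrict Λ), ‖ξ p‖ = 1) :
    ∃ M : POVM (Fin n → ℝ) (Lp ℂ 2 (volume.restrict Λ)), MatrixFormula n Λ ξ M := by
  let V : Lp ℂ 2 (volume.restrict Λ) →ₗᵢ[ℂ]
      Lp ell2 2 (volume : Measure (EuclideanSpace ℝ (Fin n))) :=
    (Lp.fourierTransformₗᵢ (EuclideanSpace ℝ (Fin n)) ell2).toLinearIsometry.comp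
      (auxJ hΛ hξ hξn)
  have hV : ∀ (ψ : (Fin n → ℝ) → ℂ) (h1 : Integrable ψ (volume.restrict Λ))
      (h2 : MemLp ψ 2 (volume.restrict Λ)), (V (h2.toLp ψ) : EuclideanSpace ℝ (Fin n) → ell2)
        =ᵐ[volume] fun y => auxF Λ ξ ψ ((2 * Real.pi) • WithLp.ofLp y) := by
    intro ψ h1 h2
    have l1 : Integrable (auxLift Λ ξ ψ) volume := memLp_one_iff_integrable.1
      (aux_lift_mem2 hΛ hξ hξn (memLp_one_iff_integrable.2 h1))
    have l2 : MemLp (auxLift Λ ξ ψ) 2 volume := aux_lift_mem2 hΛ hξ hξn h2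
    have e : auxJ hΛ hξ hξn (h2.toLp ψ) = l2.toLp _ :=
      MemLp.toLp_congr (aux_lift_mem2 hΛ hξ hξn (Lp.memLp _)) l2
        (aux_lift_congr hΛ ξ h2.coeFn_toLp)
    have e' : V (h2.toLp ψ) = 𝓕 (l2.toLp _) := by
      rw [← e]; rfl
    rw [e']
    refine (aux_fourier_toLp _ l1 l2).trans (Filter.Eventually.of_forall fun y => ?_)
    exact aux_fourier_lift hΛ ξ ψ y
  have hmeas : Measurable (fun y : EuclideanSpace ℝ (Fin n) => (2 * Real.pi) • WithLp.ofLp y) :=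
    aux_mp.measurable.const_smul (2 * Real.pi)
  refine ⟨auxPOVM volume V _ hmeas, ?_⟩
  intro φ ψ hφ1 hψ1 hφ2 hψ2 B hB
  simp_rw [aux_double hξ hξn hφ1 hψ1]
  rw [← aux_change _ hB]
  refine (auxOp_inner volume V _ _ _).trans (integral_congr_ae ?_)
  filter_upwards [ae_restrict_of_ae (hV φ hφ1 hφ2), ae_restrict_of_ae (hV ψ hψ1 hψ2)] with y a b
  rw [a, b]

lemma aux_unique {Λ : Set (Fin n → ℝ)} {ξ : (Fin n → ℝ) → ell2}
    (M M' : POVM (Fin n → ℝ) (Lp ℂ 2 (volume.restrict Λ)))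
    (h : MatrixFormula n Λ ξ M) (h' : MatrixFormula n Λ ξ M')
    (B : Set (Fin n → ℝ)) (hB : MeasurableSet B) : M.toFun B = M'.toFun B := by
  refine aux_ext _ _ _ fun φ ψ hφ hψ => ?_
  have a := h φ ψ hφ hψ (Lp.memLp φ) (Lp.memLp ψ) B hB
  have b := h' φ ψ hφ hψ (Lp.memLp φ) (Lp.memLp ψ) B hB
  simp only [Lp.toLp_coeFn] at a b
  rw [a, b]

lemma aux_shift (Λ : Set (Fin n → ℝ)) (ξ : (Fin n → ℝ) → ell2) (ψ : (Fin n → ℝ) → ℂ)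
    (q x : Fin n → ℝ) :
    auxF Λ ξ (fun p => Complex.exp (Complex.I * (∑ k, q k * p k)) * ψ p) (x + q)
      = auxF Λ ξ ψ x := by
  unfold auxF
  congr 1
  ext1 p
  rw [← mul_assoc, ← Complex.exp_add]
  congr 3
  simp only [Pi.add_apply, add_mul, Finset.sum_add_distrib]
  push_cast
  ring

lemma aux_cov {Λ : Set (Fin n → ℝ)} {ξ : (Fin n → ℝ) → ell2}
    (hξ : StronglyMeasurable ξ) (hξn : ∀ᵐ p ∂(volume.restrict Λ), ‖ξ p‖ = 1)
    (U : (Fin n → ℝ) →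
      (Lp ℂ 2 (volume.restrict Λ) ≃ₗᵢ[ℂ] Lp ℂ 2 (volume.restrict Λ)))
    (hU : ∀ q : Fin n → ℝ, ∀ φ : Lp ℂ 2 (volume.restrict Λ),
      (U q φ : (Fin n → ℝ) → ℂ) =ᵐ[volume.restrict Λ]
        fun p => Complex.exp (Complex.I * (∑ k, q k * p k)) * φ p)
    (M : POVM (Fin n → ℝ) (Lp ℂ 2 (volume.restrict Λ)))
    (h : MatrixFormula n Λ ξ M) : IsCovariantPos n Λ U M := by
  intro q B hB
  let W : Lp ℂ 2 (volume.restrict Λ) →L[ℂ] Lp ℂ 2 (volume.restrict Λ) :=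
    (U q).toLinearIsometry.toContinuousLinearMap
  have hBq : MeasurableSet ((fun x => x + q) '' B) :=
    (MeasurableEquiv.addRight q).measurableEmbedding.measurableSet_image.2 hB
  have key : (ContinuousLinearMap.adjoint W).comp ((M.toFun ((fun x => x + q) '' B)).comp W)
      = M.toFun B := by
    refine aux_ext _ _ _ fun φ ψ hφ hψ => ?_
    rw [ContinuousLinearMap.comp_apply, ContinuousLinearMap.adjoint_inner_right]
    have hint : ∀ χ : Lp ℂ 2 (volume.restrict Λ), Integrable χ (volume.restrict Λ) →
        Integrable (fun p => Complex.exp (Complex.I * (∑ k, q k * p k)) * χ p)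
          (volume.restrict Λ) := by
      intro χ hχ
      refine hχ.norm.mono' (AEStronglyMeasurable.mul
        (Continuous.aestronglyMeasurable (by fun_prop)) hχ.1)
        (Filter.Eventually.of_forall fun p => ?_)
      rw [norm_mul, Complex.norm_exp]
      simp
    have hmem : ∀ χ : Lp ℂ 2 (volume.restrict Λ),
        MemLp (fun p => Complex.exp (Complex.I * (∑ k, q k * p k)) * χ p) 2
          (volume.restrict Λ) := fun χ => (memLp_congr_ae (hU q χ)).1 (Lp.memLp _)
    have hW : ∀ χ : Lp ℂ 2 (volume.restrict Λ), W χ = (hmem χ).toLp _ := by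
      intro χ
      conv_lhs => rw [← Lp.toLp_coeFn (W χ) (Lp.memLp _)]
      exact MemLp.toLp_congr _ _ (hU q χ)
    have a := h φ ψ hφ hψ (Lp.memLp φ) (Lp.memLp ψ) B hB
    have b := h _ _ (hint φ hφ) (hint ψ hψ) (hmem φ) (hmem ψ) _ hBq
    simp only [Lp.toLp_coeFn] at a
    rw [ContinuousLinearMap.comp_apply, hW φ, hW ψ, a, b]
    congr 1
    simp_rw [aux_double hξ hξn hφ hψ, aux_double hξ hξn (hint φ hφ) (hint ψ hψ)]
    rw [(measurePreserving_add_right volume q).setIntegral_image_emb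
      (MeasurableEquiv.addRight q).measurableEmbedding]
    simp_rw [aux_shift]
  intro φ ψ
  rw [← key, ContinuousLinearMap.comp_apply, ContinuousLinearMap.adjoint_inner_right]
  rfl

end Helpers2

theorem stmt2 (n : ℕ) (hn : 1 ≤ n) (Λ : Set (Fin n → ℝ)) (hΛmeas : MeasurableSet Λ)
    (hΛpos : 0 < volume Λ)
    (U : (Fin n → ℝ) →
      (Lp ℂ 2 (volume.restrict Λ) ≃ₗᵢ[ℂ] Lp ℂ 2 (volume.restrict Λ)))
    (hU : ∀ q : Fin n → ℝ, ∀ φ : Lp ℂ 2 (volume.restrict Λ),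
      (U q φ : (Fin n → ℝ) → ℂ) =ᵐ[volume.restrict Λ]
        fun p => Complex.exp (Complex.I * (∑ k, q k * p k)) * φ p)
    (ξ : (Fin n → ℝ) → ell2)
    (hξmeas : ∀ e : ell2, Measurable fun p => ⟪e, ξ p⟫)
    (hξnorm : ∀ᵐ p ∂(volume.restrict Λ), ‖ξ p‖ = 1) :
    -- existence
    (∃ M : POVM (Fin n → ℝ) (Lp ℂ 2 (volume.restrict Λ)), MatrixFormula n Λ ξ M) ∧
    -- uniqueness (as observables, i.e. on measurable sets)
    (∀ M M' : POVM (Fin n → ℝ) (Lp ℂ 2 (volume.restrict Λ)),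
      MatrixFormula n Λ ξ M → MatrixFormula n Λ ξ M' →
      ∀ B : Set (Fin n → ℝ), MeasurableSet B → M.toFun B = M'.toFun B) ∧
    -- covariance
    (∀ M : POVM (Fin n → ℝ) (Lp ℂ 2 (volume.restrict Λ)),
      MatrixFormula n Λ ξ M → IsCovariantPos n Λ U M) := by
  have hξ := aux_stronglyMeasurable ξ hξmeas
  exact ⟨aux_exists hΛmeas hξ hξnorm, fun M M' h h' B hB => aux_unique M M' h h' B hB,
    fun M h => aux_cov hξ hξnorm U hU M h⟩
end
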